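/- arXiv:2405.07750 — 2 statements merged into one kernel-verified Lean document; each statement's English description precedes it below -/
import Mathlib

section
/- There is a connected component of the Pasch switching graph Sw_4(19) consisting of exactly 16 isomorphism classes of STS(19)s, each of which contains exactly six Pasch configurations; in each of these systems the six Pasch configurations are pairwise block-disjoint, collectively containing 18 points and 24 blocks, and every one of the 16 systems has trivial automorphism group. Moreover, the component, viewed as an undirected graph, is bipartite and its automorphism group has order 256, acting with two orbits of size 8 on the vertices. -/
/-- A Steiner triple system of order `v` on the point set `Fin v`:
a collection of 3-element blocks such that every pair of distinct points
lies in exactly one block. -/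
structure STS (v : ℕ) where
  blocks : Finset (Finset (Fin v))
  card_blocks : ∀ B ∈ blocks, B.card = 3
  covers : ∀ x y : Fin v, x ≠ y → ∃! B, B ∈ blocks ∧ x ∈ B ∧ y ∈ B

/-- Isomorphism of Steiner triple systems on the same point set: a bijection of the
points mapping the block set of one onto the block set of the other. -/
def STS.Iso {v : ℕ} (S S' : STS v) : Prop :=
  ∃ φ : Equiv.Perm (Fin v), ∀ B : Finset (Fin v), B ∈ S.blocks ↔ B.image φ ∈ S'.blocks

/-- The cycle graph `C_ab` of an STS: vertices are the points outside the block
through `a` and `b` (the remaining points are isolated vertices of this graph),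
and `x`, `y` are adjacent whenever `{a,x,y}` or `{b,x,y}` is a block. -/
def STS.cycleGraph {v : ℕ} (S : STS v) (a b : Fin v) : SimpleGraph (Fin v) :=
  SimpleGraph.fromRel fun x y =>
    (∀ B ∈ S.blocks, a ∈ B → b ∈ B → x ∉ B ∧ y ∉ B) ∧
    ((({a, x, y} : Finset (Fin v)) ∈ S.blocks) ∨ (({b, x, y} : Finset (Fin v)) ∈ S.blocks))

/-- `x 0, x 1, …, x (2k-1)` are the consecutive vertices of a cycle of length `2k`
in the cycle graph `C_ab`, listed so that the blocks through `a` occupy the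
even positions and the blocks through `b` the odd positions. -/
def IsSwitchCycle {v : ℕ} (S : STS v) (a b : Fin v) (k : ℕ)
    (x : ZMod (2 * k) → Fin v) : Prop :=
  2 ≤ k ∧ a ≠ b ∧ Function.Injective x ∧
  (∀ i : ZMod (2 * k), (S.cycleGraph a b).Adj (x i) (x (i + 1))) ∧
  (∀ j : Fin k,
    (({a, x ((2 * (j : ℕ) : ℕ)), x ((2 * (j : ℕ) + 1 : ℕ))} : Finset (Fin v)) ∈ S.blocks) ∧
    (({b, x ((2 * (j : ℕ) + 1 : ℕ)), x ((2 * (j : ℕ) + 2 : ℕ))} : Finset (Fin v)) ∈ S.blocks))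

/-- The `2k` blocks of the STS corresponding to the cycle with consecutive
vertices `x 0, …, x (2k-1)` in the cycle graph `C_ab`. -/
def removedBlocks {v : ℕ} (a b : Fin v) (k : ℕ)
    (x : ZMod (2 * k) → Fin v) : Finset (Finset (Fin v)) :=
  (Finset.univ.image fun j : Fin k =>
    ({a, x ((2 * (j : ℕ) : ℕ)), x ((2 * (j : ℕ) + 1 : ℕ))} : Finset (Fin v))) ∪
  (Finset.univ.image fun j : Fin k =>
    ({b, x ((2 * (j : ℕ) + 1 : ℕ)), x ((2 * (j : ℕ) + 2 : ℕ))} : Finset (Fin v)))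

/-- The block set obtained from `S` by the cycle switch on the cycle
`x 0, …, x (2k-1)` of `C_ab`: the `2k` cycle blocks are removed and replaced
by the blocks obtained from them by exchanging the roles of `a` and `b`. -/
def switchedBlocks {v : ℕ} (S : STS v) (a b : Fin v) (k : ℕ)
    (x : ZMod (2 * k) → Fin v) : Finset (Finset (Fin v)) :=
  (S.blocks \ removedBlocks a b k x) ∪
    (removedBlocks a b k x).image (Finset.image (Equiv.swap a b))

/-- `S'` is obtained from `S` by a single cycle switch of a cycle whose length lies
in the set `C`. -/
def SwitchStep {v : ℕ} (C : Set ℕ) (S S' : STS v) : Prop :=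
  ∃ (a b : Fin v) (k : ℕ) (x : ZMod (2 * k) → Fin v),
    2 * k ∈ C ∧ IsSwitchCycle S a b k x ∧ S'.blocks = switchedBlocks S a b k x

/-- The switching graph `Sw_C(v)`: vertices are the isomorphism classes of `STS(v)`s,
with an edge between two (distinct) classes whenever some system in one class is
transformed by a single cycle switch, of a cycle whose length lies in `C`, into a
system in the other class. -/
def SwGraph (v : ℕ) (C : Set ℕ) : SimpleGraph (Quot (@STS.Iso v)) :=
  SimpleGraph.fromRel fun q q' =>
    ∃ S S' : STS v, Quot.mk _ S = q ∧ Quot.mk _ S' = q' ∧ SwitchStep C S S'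

/-- The STS `S` contains a cycle of length `n`, i.e. some cycle graph of `S`
has a cycle of length `n`. -/
def STS.HasCycle {v : ℕ} (S : STS v) (n : ℕ) : Prop :=
  ∃ a b : Fin v, a ≠ b ∧ ∃ (z : Fin v) (w : (S.cycleGraph a b).Walk z z),
    w.IsCycle ∧ w.length = n

/-- `W` is the vertex set of a cycle of length `n` in the cycle graph `C_ab`. -/
def CycleOn {v : ℕ} (S : STS v) (a b : Fin v) (n : ℕ) (W : Finset (Fin v)) : Prop :=
  W.card = n ∧ ∃ z ∈ W, ∃ w : (S.cycleGraph a b).Walk z z,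
    w.IsCycle ∧ w.length = n ∧ ∀ u : Fin v, u ∈ w.support ↔ u ∈ W

/-- The number of cycles of length `n` in the STS `S`: a cycle is recorded as a pair
consisting of the (unordered) pair `{a,b}` of points and the vertex set of the cycle
in `C_ab`. -/
noncomputable def STS.numCycles {v : ℕ} (S : STS v) (n : ℕ) : ℕ :=
  Nat.card {p : Finset (Fin v) × Finset (Fin v) //
    ∃ a b : Fin v, a ≠ b ∧ p.1 = {a, b} ∧ CycleOn S a b n p.2}

/-- The cycle graph `C_ab` decomposes as the disjoint union of cycles whose vertex
sets are listed in `Ws` and whose lengths are given by the list `L`. -/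
def CycleStructure {v : ℕ} (S : STS v) (a b : Fin v) (L : List ℕ) : Prop :=
  ∃ Ws : List (Finset (Fin v)),
    Ws.map Finset.card = L ∧ List.Pairwise Disjoint Ws ∧
    (∀ W ∈ Ws, CycleOn S a b W.card W) ∧
    (∀ z : Fin v, (∀ B ∈ S.blocks, a ∈ B → b ∈ B → z ∉ B) ↔ ∃ W ∈ Ws, z ∈ W)

/-- The six points `a,…,f` carry a Pasch configuration of `S`, with blocks
`{a,b,c}, {a,d,e}, {b,e,f}, {c,d,f}`. -/
def PaschQuad {v : ℕ} (S : STS v) (a b c d e f : Fin v) : Prop :=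
  ({a, b, c, d, e, f} : Finset (Fin v)).card = 6 ∧
  ({a, b, c} : Finset (Fin v)) ∈ S.blocks ∧ ({a, d, e} : Finset (Fin v)) ∈ S.blocks ∧
  ({b, e, f} : Finset (Fin v)) ∈ S.blocks ∧ ({c, d, f} : Finset (Fin v)) ∈ S.blocks

/-- `S` contains a Pasch configuration. -/
def STS.HasPasch {v : ℕ} (S : STS v) : Prop :=
  ∃ a b c d e f : Fin v, PaschQuad S a b c d e f

/-- `P` is (the block set of) a Pasch configuration of `S`. -/
def IsPaschConfig {v : ℕ} (S : STS v) (P : Finset (Finset (Fin v))) : Prop :=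
  ∃ a b c d e f : Fin v, PaschQuad S a b c d e f ∧
    P = {({a, b, c} : Finset (Fin v)), {a, d, e}, {b, e, f}, {c, d, f}}

/-- The block set obtained from `S` by switching the Pasch configuration
`{a,b,c}, {a,d,e}, {b,e,f}, {c,d,f}`: its four blocks are replaced by the unique
other set of four blocks on the same six points covering the same pairs. -/
def paschSwitched {v : ℕ} (S : STS v) (a b c d e f : Fin v) : Finset (Finset (Fin v)) :=
  (S.blocks \ {({a, b, c} : Finset (Fin v)), {a, d, e}, {b, e, f}, {c, d, f}}) ∪
    {({a, b, e} : Finset (Fin v)), {a, c, d}, {b, c, f}, {d, e, f}}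

/-- `S` and `S'` are twin systems: they are non-isomorphic, each contains exactly one
Pasch configuration, and switching this unique Pasch configuration in each system
yields a system isomorphic to the other. -/
def IsTwinPair {v : ℕ} (S S' : STS v) : Prop :=
  ¬ S.Iso S' ∧
  (∃! P, IsPaschConfig S P) ∧ (∃! P, IsPaschConfig S' P) ∧
  (∀ a b c d e f : Fin v, PaschQuad S a b c d e f →
    ∃ T : STS v, T.blocks = paschSwitched S a b c d e f ∧ T.Iso S') ∧
  (∀ a b c d e f : Fin v, PaschQuad S' a b c d e f →
    ∃ T : STS v, T.blocks = paschSwitched S' a b c d e f ∧ T.Iso S)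

/-- The isomorphism classes `q` and `q'` are the classes of a pair of twin systems. -/
def QTwin {v : ℕ} (q q' : Quot (@STS.Iso v)) : Prop :=
  ∃ S S' : STS v, Quot.mk _ S = q ∧ Quot.mk _ S' = q' ∧ IsTwinPair S S'

namespace Sw16

/-- Entry `k` of a table packed with `b` bits per entry. -/
def ent (T b k : ℕ) : ℕ := Nat.mod (Nat.shiftRight T (Nat.mul b k)) (Nat.pow 2 b)

/-- Third points (5 bits per ordered pair) when the switch bit of the hexad is 0. -/
def tabA : ℕ := 1322994162521659993325577673808758505650905380843413520559902863625161318466883866541834906636777282471020475248729659816465462542781622939927808219175227681662130732496902083805676532021895502919972410583264873516468096184562880460019730708433854871180913711997737380833736655547100012018161455480169408195367896146745846107410353221963482484256975029233290093959404941589827382646493782343175499207617574975104815893882475688937830418932204789618750141892778606365642594932008224733168578092620884777928487555411125480201879199192435009201664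

/-- Third points when the switch bit of the hexad is 1. -/
def tabB : ℕ := 1322994162521659993325577673808759020502148776156344930945136129722175943159604595725752007674024223116016827460212922766755858226638427960515048482033952793861315653289491574237316357977126961758321935693810717896913742321534076707869229770873426849639842341423750031026775730639717139764237309458489350984269207752565636548595758548990555245564280493396998939619658084000023177762642857769110936200419457622663121295782868607576438186489050127387254793649371833495015815174422152874254317707097133765893808770913703184347070725864902533522976

/-- Index of the hexad containing a pair (3 bits per ordered pair; 7 for none). -/
def tabH : ℕ := 103629953693343036595650290405792206048261348518310559039913875780076495347861510062902409231176662730050125868457269926323997772896800045650801760580368083609035613745066685866805992419742814025676822698388167818450213879852259610611589879839028034634246990682127267440962577612739172411981174894824540887625261948595570212807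

/-- The six hexads, as three antipodal pairs each (5 bits per entry). -/
def tabP : ℕ := 542327317075324886966896725679548570355969122084521184

/-- The 16 representatives (6 bits per entry). -/
def tabR : ℕ := 21069863228481244328612660499

/-- The class index of each of the 64 systems (4 bits per entry). -/
def tabC : ℕ := 57255180977913667869751933215291246963342639087072263122629290806645724961255

/-- Which of the four permutations carries a system to its representative. -/
def tabE : ℕ := 340256297290004412178407984690453565440

/-- The four permutations (5 bits per entry). -/
def tabM : ℕ := 1425016918135586058353548389418418899645399673708075362290651064246707379945515419304114689278719514653763532064800

/-- Adjacency matrix of the component. -/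
def tabG : ℕ := 38004063371478444531170237977080535413720337602166834712009172941894338322474

def hx (x y : ℕ) : ℕ := ent tabH 3 (Nat.add (Nat.mul 19 x) y)

/-- The third point of the block through `x`, `y` in system number `e`. -/
def op (e x y : ℕ) : ℕ :=
  bif Nat.testBit e (hx x y) then ent tabB 5 (Nat.add (Nat.mul 19 x) y)
  else ent tabA 5 (Nat.add (Nat.mul 19 x) y)

def hp (i j : ℕ) : ℕ := ent tabP 5 (Nat.add (Nat.mul 6 i) j)
def rep (r : ℕ) : ℕ := ent tabR 6 r
def cls (e : ℕ) : ℕ := ent tabC 4 e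
def eta (e : ℕ) : ℕ := ent tabE 2 e
def pm (k x : ℕ) : ℕ := ent tabM 5 (Nat.add (Nat.mul 19 k) x)
def adjN (i j : ℕ) : Bool := Nat.beq (ent tabG 1 (Nat.add (Nat.mul 16 i) j)) 1

def allB (n : ℕ) (f : ℕ → Bool) : Bool :=
  Nat.rec (motive := fun _ => Bool) true (fun k ih => and (f k) ih) n

def anyB (n : ℕ) (f : ℕ → Bool) : Bool :=
  Nat.rec (motive := fun _ => Bool) false (fun k ih => or (f k) ih) n

theorem allB_iff (n : ℕ) (f : ℕ → Bool) : allB n f = true ↔ ∀ i < n, f i = true := by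
  induction n with
  | zero => simp [allB]
  | succ n ih =>
    have : allB (n + 1) f = (f n && allB n f) := rfl
    rw [this, Bool.and_eq_true, ih]
    constructor
    · rintro ⟨h1, h2⟩ i hi
      rcases Nat.lt_succ_iff_lt_or_eq.mp hi with h | h
      · exact h2 i h
      · exact h ▸ h1
    · intro h
      exact ⟨h n (by omega), fun i hi => h i (by omega)⟩

theorem anyB_iff (n : ℕ) (f : ℕ → Bool) : anyB n f = true ↔ ∃ i < n, f i = true := by
  induction n with
  | zero => simp [anyB]
  | succ n ih =>
    have : anyB (n + 1) f = (f n || anyB n f) := rfl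
    rw [this, Bool.or_eq_true, ih]
    constructor
    · rintro (h | ⟨i, hi, h⟩)
      · exact ⟨n, by omega, h⟩
      · exact ⟨i, by omega, h⟩
    · rintro ⟨i, hi, h⟩
      rcases Nat.lt_succ_iff_lt_or_eq.mp hi with h' | h'
      · exact Or.inr ⟨i, h', h⟩
      · exact Or.inl (h' ▸ h)

def mem3 (x y z u : ℕ) : Bool := or (Nat.beq u x) (or (Nat.beq u y) (Nat.beq u z))

/-- The block of system `e` through `x`, `y` belongs to the Pasch configuration on hexad `i`. -/
def inQ (e i x y : ℕ) : Bool :=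
  and (or (mem3 x y (op e x y) (hp i 0)) (mem3 x y (op e x y) (hp i 1)))
    (or (mem3 x y (op e x y) (hp i 2)) (mem3 x y (op e x y) (hp i 3)))

theorem chkSQ : (allB 64 fun e => allB 19 fun x => allB 19 fun y =>
    and (Nat.ble (op e x y) 18) (and (Nat.beq (op e x x) x)
      (and (Nat.beq (op e x y) (op e y x)) (Nat.beq (op e x (op e x y)) y)))) = true := by
  decide +kernel

/-- The Pasch configuration `abc, ade, bef, cdf` of system `e` is the one on hexad `i`,
and switching it gives system `e ^^^ 2 ^ i`. -/
def hit (e a b c d p f i : ℕ) : Bool :=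
  and (inQ e i a b) (and (inQ e i a d) (and (inQ e i b p) (and (inQ e i c d)
    (and (Nat.beq (op (Nat.xor e (Nat.pow 2 i)) a b) p)
    (and (Nat.beq (op (Nat.xor e (Nat.pow 2 i)) a c) d)
    (and (Nat.beq (op (Nat.xor e (Nat.pow 2 i)) b c) f)
      (Nat.beq (op (Nat.xor e (Nat.pow 2 i)) d p) f)))))))

theorem chkPasch : (allB 16 fun r => allB 19 fun a => allB 19 fun d => allB d fun b =>
    or (not (Nat.beq (op (rep r) b (op (rep r) a d)) (op (rep r) (op (rep r) a b) d)))
      (or (Nat.beq a b) (or (mem3 a b (op (rep r) a b) d)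
        (anyB 6 fun i => hit (rep r) a b (op (rep r) a b) d (op (rep r) a d)
          (op (rep r) b (op (rep r) a d)) i)))) = true := by
  decide +kernel

theorem chkHX : (allB 16 fun r => allB 6 fun i => allB 19 fun x => allB 19 fun y =>
    or (Nat.beq x y) (or (and (inQ (rep r) i x y) (Nat.beq (hx x y) i))
      (and (not (inQ (rep r) i x y)) (not (Nat.beq (hx x y) i))))) = true := by
  decide +kernel

theorem chkHX2 : (allB 19 fun x => allB 19 fun y =>
    or (Nat.ble (hx x y) 5) (Nat.beq (hx x y) 7)) = true := by
  decide +kernel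

theorem chkIso : (allB 64 fun e => allB 19 fun x => allB 19 fun y =>
    Nat.beq (pm (eta e) (op e x y)) (op (rep (cls e)) (pm (eta e) x) (pm (eta e) y))) = true := by
  decide +kernel

theorem chkPm : (allB 4 fun k => allB 19 fun x =>
    and (Nat.ble (pm k x) 18) (Nat.beq (pm k (pm k x)) x)) = true := by
  decide +kernel

theorem chkNon : (allB 16 fun r => allB 16 fun s => allB 4 fun k =>
    or (and (Nat.beq r s) (Nat.beq k 0))
      (not (allB 19 fun x => allB 19 fun y =>
        Nat.beq (pm k (op (rep r) x y)) (op (rep s) (pm k x) (pm k y))))) = true := by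
  decide +kernel

theorem chkAdj : (allB 16 fun i => allB 16 fun j =>
    or (and (adjN i j) (and (not (Nat.beq i j))
        (anyB 6 fun t => Nat.beq (cls (Nat.xor (rep i) (Nat.pow 2 t))) j)))
      (and (not (adjN i j)) (or (Nat.beq i j)
        (not (anyB 6 fun t => Nat.beq (cls (Nat.xor (rep i) (Nat.pow 2 t))) j))))) = true := by
  decide +kernel

theorem chkRep : (allB 16 fun r => and (Nat.ble (rep r) 63) (Nat.beq (cls (rep r)) r)) = true := by
  decide +kernel

theorem chkCls : (allB 64 fun e => and (Nat.ble (cls e) 15) (Nat.ble (eta e) 3)) = true := by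
  decide +kernel

theorem chkXor : (allB 16 fun r => allB 6 fun i => and (Nat.ble (Nat.xor (rep r) (Nat.pow 2 i)) 63)
    (not (Nat.beq i 7))) = true := by
  decide +kernel

theorem chkHp : (allB 6 fun i => and (allB 6 fun j => Nat.ble (hp i j) 18)
    (and (and (not (Nat.beq (hp i 0) (hp i 2))) (not (Nat.beq (hp i 0) (hp i 3))))
    (and (not (Nat.beq (hp i 1) (hp i 2))) (not (Nat.beq (hp i 1) (hp i 3)))))) = true := by
  decide +kernel

end Sw16

namespace Sw16

/-! ### General facts on Steiner triple systems -/

theorem sts_ext {v : ℕ} {S T : STS v} (h : S.blocks = T.blocks) : S = T := by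
  cases S; cases T; simp at h; subst h; rfl

theorem block_eq {v : ℕ} (S : STS v) {B C : Finset (Fin v)} (hB : B ∈ S.blocks)
    (hC : C ∈ S.blocks) {x y : Fin v} (hxy : x ≠ y) (hxB : x ∈ B) (hyB : y ∈ B)
    (hxC : x ∈ C) (hyC : y ∈ C) : B = C :=
  (S.covers x y hxy).unique ⟨hB, hxB, hyB⟩ ⟨hC, hxC, hyC⟩

theorem triple_ne {v : ℕ} (S : STS v) {x y z : Fin v}
    (h : ({x, y, z} : Finset (Fin v)) ∈ S.blocks) : x ≠ y ∧ x ≠ z ∧ y ≠ z := by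
  have h3 := S.card_blocks _ h
  refine ⟨?_, ?_, ?_⟩
  · rintro rfl
    have := Finset.card_le_two (a := x) (b := z)
    simp at h3; omega
  · rintro rfl
    have h4 : ({x, y, x} : Finset (Fin v)) = {x, y} := by ext; simp; tauto
    have := Finset.card_le_two (a := x) (b := y)
    rw [h4] at h3; omega
  · rintro rfl
    have := Finset.card_le_two (a := x) (b := y)
    simp at h3; omega

theorem third_unique {v : ℕ} (S : STS v) {x y z w : Fin v}
    (h : ({x, y, z} : Finset (Fin v)) ∈ S.blocks)
    (h' : ({x, y, w} : Finset (Fin v)) ∈ S.blocks) : z = w := by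
  have h1 := triple_ne S h
  have h2 := triple_ne S h'
  have := block_eq S h h' h1.1 (by simp) (by simp) (by simp) (by simp)
  have hz : z ∈ ({x, y, w} : Finset (Fin v)) := by rw [← this]; simp
  simp only [Finset.mem_insert, Finset.mem_singleton] at hz
  rcases hz with rfl | rfl | rfl
  · exact absurd rfl h1.2.1
  · exact absurd rfl h1.2.2
  · rfl

theorem exists_pair {v : ℕ} (S : STS v) {B : Finset (Fin v)} (hB : B ∈ S.blocks) :
    ∃ x y, x ≠ y ∧ x ∈ B ∧ y ∈ B := by
  have h3 := S.card_blocks B hB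
  obtain ⟨x, hx, y, hy, hxy⟩ := Finset.one_lt_card.mp (by omega : 1 < B.card)
  exact ⟨x, y, hxy, hx, hy⟩

theorem exists_triple {v : ℕ} (S : STS v) {B : Finset (Fin v)} (hB : B ∈ S.blocks) :
    ∃ x y z, x ≠ y ∧ x ≠ z ∧ y ≠ z ∧ B = {x, y, z} := by
  have h3 := S.card_blocks B hB
  obtain ⟨x, y, z, h1, h2, h3, h4⟩ := Finset.card_eq_three.mp h3
  exact ⟨x, y, z, h1, h2, h3, h4⟩

/-- Relabelling of a system. -/
def mapS {v : ℕ} (φ : Equiv.Perm (Fin v)) (S : STS v) : STS v where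
  blocks := S.blocks.image (Finset.image φ)
  card_blocks := by
    intro B hB
    obtain ⟨C, hC, rfl⟩ := Finset.mem_image.mp hB
    rw [Finset.card_image_of_injective _ φ.injective]
    exact S.card_blocks C hC
  covers := by
    intro x y hxy
    obtain ⟨B, ⟨hB, hx, hy⟩, hu⟩ := S.covers (φ.symm x) (φ.symm y) (by simpa using hxy)
    refine ⟨B.image φ, ⟨Finset.mem_image_of_mem _ hB, ?_, ?_⟩, ?_⟩
    · exact Finset.mem_image.mpr ⟨_, hx, by simp⟩
    · exact Finset.mem_image.mpr ⟨_, hy, by simp⟩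
    · rintro D ⟨hD, hxD, hyD⟩
      obtain ⟨C, hC, rfl⟩ := Finset.mem_image.mp hD
      obtain ⟨x', hx', rfl⟩ := Finset.mem_image.mp hxD
      obtain ⟨y', hy', rfl⟩ := Finset.mem_image.mp hyD
      rw [hu C ⟨hC, by simpa using hx', by simpa using hy'⟩]

theorem image_inj {v : ℕ} (φ : Equiv.Perm (Fin v)) :
    Function.Injective (Finset.image φ : Finset (Fin v) → Finset (Fin v)) :=
  Finset.image_injective φ.injective

theorem mem_mapS {v : ℕ} (φ : Equiv.Perm (Fin v)) (S : STS v) (B : Finset (Fin v)) :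
    B.image φ ∈ (mapS φ S).blocks ↔ B ∈ S.blocks := by
  constructor
  · intro h
    obtain ⟨C, hC, hE⟩ := Finset.mem_image.mp h
    exact image_inj φ hE ▸ hC
  · exact fun h => Finset.mem_image_of_mem _ h

theorem mem_mapS3 {v : ℕ} (φ : Equiv.Perm (Fin v)) (S : STS v) (x y z : Fin v) :
    ({φ x, φ y, φ z} : Finset (Fin v)) ∈ (mapS φ S).blocks ↔
      ({x, y, z} : Finset (Fin v)) ∈ S.blocks := by
  rw [← mem_mapS φ S]
  simp [Finset.image_insert]

theorem iso_iff {v : ℕ} (S S' : STS v) : S.Iso S' ↔ ∃ φ : Equiv.Perm (Fin v), S' = mapS φ S := by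
  constructor
  · rintro ⟨φ, h⟩
    refine ⟨φ, sts_ext ?_⟩
    ext B
    have hB : B = (B.image φ.symm).image φ := by
      rw [Finset.image_image]; simp
    rw [hB, ← h, mem_mapS]
  · rintro ⟨φ, rfl⟩
    exact ⟨φ, fun B => (mem_mapS φ S B).symm⟩

theorem iso_map {v : ℕ} (φ : Equiv.Perm (Fin v)) (S : STS v) : S.Iso (mapS φ S) :=
  (iso_iff _ _).mpr ⟨φ, rfl⟩

theorem iso_equiv (v : ℕ) : Equivalence (@STS.Iso v) where
  refl S := ⟨Equiv.refl _, fun B => by simp⟩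
  symm := by
    rintro S S' ⟨φ, h⟩
    refine ⟨φ.symm, fun B => ?_⟩
    rw [h, Finset.image_image]; simp
  trans := by
    rintro S S' S'' ⟨φ, h⟩ ⟨ψ, h'⟩
    refine ⟨φ.trans ψ, fun B => ?_⟩
    rw [h, h', Finset.image_image]; rfl

theorem mk_eq {v : ℕ} (S S' : STS v) :
    (Quot.mk (@STS.Iso v) S = Quot.mk (@STS.Iso v) S') ↔ S.Iso S' := by
  constructor
  · intro h
    exact (iso_equiv v).eqvGen_iff.mp (Quot.eqvGen_exact h)
  · exact fun h => Quot.sound h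

/-! ### Pasch configurations and switches -/

theorem six_ne {v : ℕ} {a b c d e f : Fin v}
    (h : ({a, b, c, d, e, f} : Finset (Fin v)).card = 6) :
    [a, b, c, d, e, f].Nodup := by
  have : ({a, b, c, d, e, f} : Finset (Fin v)) = [a, b, c, d, e, f].toFinset := by simp
  rw [this] at h
  rw [← List.dedup_eq_self]
  rw [List.card_toFinset] at h
  exact (List.dedup_sublist _).eq_of_length (by simpa using h)

theorem six_card {v : ℕ} {a b c d e f : Fin v} (h : [a, b, c, d, e, f].Nodup) :
    ({a, b, c, d, e, f} : Finset (Fin v)).card = 6 := by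
  have h1 : ({a, b, c, d, e, f} : Finset (Fin v)) = [a, b, c, d, e, f].toFinset := by simp
  rw [h1, List.toFinset_card_of_nodup h]; rfl

/-- `S'` arises from `S` by a Pasch switch. -/
def PSw {v : ℕ} (S S' : STS v) : Prop :=
  ∃ a b c d e f : Fin v, PaschQuad S a b c d e f ∧ S'.blocks = paschSwitched S a b c d e f

/-- If all blocks of the switched block set are blocks of `S'`, they are all of them. -/
theorem switched_eq {v : ℕ} {S S' : STS v} {a b c d e f : Fin v}
    (_hP : PaschQuad S a b c d e f) (h : paschSwitched S a b c d e f ⊆ S'.blocks) :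
    S'.blocks = paschSwitched S a b c d e f := by
  apply Finset.Subset.antisymm _ h
  intro B hB
  obtain ⟨x, y, hxy, hx, hy⟩ := exists_pair S' hB
  obtain ⟨C, ⟨hC, hxC, hyC⟩, -⟩ := S.covers x y hxy
  suffices hN : ∃ N ∈ paschSwitched S a b c d e f, x ∈ N ∧ y ∈ N by
    obtain ⟨N, hN, hxN, hyN⟩ := hN
    rw [block_eq S' hB (h hN) hxy hx hy hxN hyN]
    exact hN
  by_cases hold : C ∈ ({({a, b, c} : Finset (Fin v)), {a, d, e}, {b, e, f}, {c, d, f}} :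
      Finset (Finset (Fin v)))
  · have hnew : ∃ N ∈ ({({a, b, e} : Finset (Fin v)), {a, c, d}, {b, c, f}, {d, e, f}} :
        Finset (Finset (Fin v))), x ∈ N ∧ y ∈ N := by
      simp only [Finset.mem_insert, Finset.mem_singleton, exists_eq_or_imp, exists_eq_left]
      simp only [Finset.mem_insert, Finset.mem_singleton] at hold
      rcases hold with rfl | rfl | rfl | rfl <;>
        simp only [Finset.mem_insert, Finset.mem_singleton] at hxC hyC <;>
        rcases hxC with rfl | rfl | rfl <;> rcases hyC with rfl | rfl | rfl <;>
        first
          | exact absurd rfl hxy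
          | simp
    obtain ⟨N, hN, h1, h2⟩ := hnew
    exact ⟨N, Finset.mem_union_right _ hN, h1, h2⟩
  · exact ⟨C, Finset.mem_union_left _ (Finset.mem_sdiff.mpr ⟨hC, hold⟩), hxC, hyC⟩

theorem quad_map {v : ℕ} (φ : Equiv.Perm (Fin v)) {S : STS v} {a b c d e f : Fin v}
    (h : PaschQuad S a b c d e f) :
    PaschQuad (mapS φ S) (φ a) (φ b) (φ c) (φ d) (φ e) (φ f) := by
  obtain ⟨h0, h1, h2, h3, h4⟩ := h
  refine ⟨?_, (mem_mapS3 ..).mpr h1, (mem_mapS3 ..).mpr h2, (mem_mapS3 ..).mpr h3,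
    (mem_mapS3 ..).mpr h4⟩
  have := Finset.card_image_of_injective ({a, b, c, d, e, f} : Finset (Fin v)) φ.injective
  rw [h0] at this
  simpa [Finset.image_insert] using this

theorem switched_map {v : ℕ} (φ : Equiv.Perm (Fin v)) (S : STS v) (a b c d e f : Fin v) :
    paschSwitched (mapS φ S) (φ a) (φ b) (φ c) (φ d) (φ e) (φ f) =
      (paschSwitched S a b c d e f).image (Finset.image φ) := by
  unfold paschSwitched
  rw [Finset.image_union, Finset.image_sdiff _ _ (image_inj φ)]
  simp [Finset.image_insert, mapS]

theorem psw_map {v : ℕ} (φ : Equiv.Perm (Fin v)) {S S' : STS v} (h : PSw S S') :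
    PSw (mapS φ S) (mapS φ S') := by
  obtain ⟨a, b, c, d, e, f, hP, hS⟩ := h
  refine ⟨φ a, φ b, φ c, φ d, φ e, φ f, quad_map φ hP, ?_⟩
  rw [switched_map, ← hS]; rfl

theorem psw_symm {v : ℕ} {S S' : STS v} (h : PSw S S') : PSw S' S := by
  obtain ⟨a, b, c, d, e, f, hP, hS⟩ := h
  have hn : ∀ N ∈ ({({a, b, e} : Finset (Fin v)), {a, c, d}, {b, c, f}, {d, e, f}} :
      Finset (Finset (Fin v))), N ∈ S'.blocks := by
    intro N hN
    rw [hS]; exact Finset.mem_union_right _ hN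
  simp only [Finset.mem_insert, Finset.mem_singleton, forall_eq_or_imp, forall_eq] at hn
  obtain ⟨n1, n2, n3, n4⟩ := hn
  have hN := six_ne hP.1
  have hQ : PaschQuad S' a b e d c f := by
    refine ⟨six_card ?_, n1, ?_, n3, ?_⟩
    · simp at hN ⊢; tauto
    · rwa [Finset.pair_comm d c]
    · rwa [Finset.insert_comm e d]
  refine ⟨a, b, e, d, c, f, hQ, switched_eq hQ ?_⟩
  obtain ⟨-, h1, h2, h3, h4⟩ := hP
  intro N hN
  rcases Finset.mem_union.mp hN with hN | hN
  · obtain ⟨hN1, hN2⟩ := Finset.mem_sdiff.mp hN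
    rw [hS] at hN1
    rcases Finset.mem_union.mp hN1 with hN3 | hN3
    · exact (Finset.mem_sdiff.mp hN3).1
    · exfalso
      apply hN2
      simp only [Finset.mem_insert, Finset.mem_singleton] at hN3 ⊢
      rcases hN3 with rfl | rfl | rfl | rfl
      · simp
      · rw [Finset.pair_comm d c]; simp
      · simp
      · rw [Finset.insert_comm e d]; simp
  · simp only [Finset.mem_insert, Finset.mem_singleton] at hN
    rcases hN with rfl | rfl | rfl | rfl
    · exact h1
    · rwa [Finset.pair_comm e d]
    · exact h3
    · rwa [Finset.insert_comm d c]

theorem step_psw {v : ℕ} {S S' : STS v} (h : SwitchStep {4} S S') : PSw S S' := by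
  obtain ⟨a, b, k, x, hk, ⟨-, hab, hinj, hadj, hbl⟩, hS⟩ := h
  have hk2 : k = 2 := by simp at hk; omega
  subst hk2
  have hb0 := hbl 0
  have hb1 := hbl 1
  have e0 : ((2 * ((0 : Fin 2) : ℕ) : ℕ) : ZMod (2 * 2)) = 0 := by decide
  have e1 : ((2 * ((0 : Fin 2) : ℕ) + 1 : ℕ) : ZMod (2 * 2)) = 1 := by decide
  have e2 : ((2 * ((0 : Fin 2) : ℕ) + 2 : ℕ) : ZMod (2 * 2)) = 2 := by decide
  have f0 : ((2 * ((1 : Fin 2) : ℕ) : ℕ) : ZMod (2 * 2)) = 2 := by decide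
  have f1 : ((2 * ((1 : Fin 2) : ℕ) + 1 : ℕ) : ZMod (2 * 2)) = 3 := by decide
  have f2 : ((2 * ((1 : Fin 2) : ℕ) + 2 : ℕ) : ZMod (2 * 2)) = 0 := by decide
  rw [e0, e1, e2] at hb0
  rw [f0, f1, f2] at hb1
  obtain ⟨B, ⟨hB, haB, hbB⟩, -⟩ := S.covers a b hab
  have hout : ∀ i, x i ∉ B := by
    intro i
    have := hadj i
    rw [STS.cycleGraph, SimpleGraph.fromRel_adj] at this
    rcases this.2 with h | h
    · exact (h.1 B hB haB hbB).1
    · exact (h.1 B hB haB hbB).2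
  have hxa : ∀ i, x i ≠ a := fun i h => hout i (h ▸ haB)
  have hxb : ∀ i, x i ≠ b := fun i h => hout i (h ▸ hbB)
  have n01 : x 0 ≠ x 1 := fun h => absurd (hinj h) (by decide)
  have n02 : x 0 ≠ x 2 := fun h => absurd (hinj h) (by decide)
  have n03 : x 0 ≠ x 3 := fun h => absurd (hinj h) (by decide)
  have n12 : x 1 ≠ x 2 := fun h => absurd (hinj h) (by decide)
  have n13 : x 1 ≠ x 3 := fun h => absurd (hinj h) (by decide)
  have n23 : x 2 ≠ x 3 := fun h => absurd (hinj h) (by decide)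
  have hrem : removedBlocks a b 2 x = {({a, x 1, x 0} : Finset (Fin v)), {a, x 3, x 2},
      {x 1, x 2, b}, {x 0, x 3, b}} := by
    have hu : (Finset.univ : Finset (Fin 2)) = {0, 1} := rfl
    unfold removedBlocks
    rw [hu]
    simp only [Finset.image_insert, Finset.image_singleton, e0, e1, e2, f0, f1, f2]
    rw [Finset.pair_comm (x 1) (x 0), Finset.pair_comm (x 3) (x 2),
      Finset.pair_comm (x 2) b, Finset.insert_comm (x 1) b,
      Finset.pair_comm (x 3) b, Finset.insert_comm (x 0) b, Finset.pair_comm (x 0) (x 3)]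
    ext N
    simp only [Finset.mem_union, Finset.mem_insert, Finset.mem_singleton, or_assoc]
  have hsw : ∀ i, Equiv.swap a b (x i) = x i := fun i =>
    Equiv.swap_apply_of_ne_of_ne (hxa i) (hxb i)
  refine ⟨a, x 1, x 0, x 3, x 2, b, ⟨six_card ?_, ?_, ?_, ?_, ?_⟩, ?_⟩
  · have a0 := hxa 0
    have a1 := hxa 1
    have a2 := hxa 2
    have a3 := hxa 3
    have b0 := hxb 0
    have b1 := hxb 1
    have b2 := hxb 2
    have b3 := hxb 3
    simp only [List.nodup_cons, List.mem_cons, List.not_mem_nil, or_false, not_or, ne_eq,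
      not_false_eq_true, List.nodup_nil, and_true]
    refine ⟨⟨a1.symm, a0.symm, a3.symm, a2.symm, hab⟩, ⟨n01.symm, n13, n12, b1⟩,
      ⟨n03, n02, b0⟩, ⟨n23.symm, b3⟩, b2⟩
  · rw [Finset.pair_comm]; exact hb0.1
  · rw [Finset.pair_comm]; exact hb1.1
  · rw [Finset.pair_comm (x 2) b, Finset.insert_comm]; exact hb0.2
  · rw [Finset.pair_comm (x 3) b, Finset.insert_comm, Finset.pair_comm]; exact hb1.2
  · rw [hS, switchedBlocks, paschSwitched, hrem]
    congr 1
    simp only [Finset.image_insert, Finset.image_singleton, hsw, Equiv.swap_apply_left,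
      Equiv.swap_apply_right]
    ext N
    simp only [Finset.mem_insert, Finset.mem_singleton]
    have t1 : ({b, x 1, x 0} : Finset (Fin v)) = {x 1, x 0, b} := by ext; simp; tauto
    have t2 : ({b, x 3, x 2} : Finset (Fin v)) = {x 3, x 2, b} := by ext; simp; tauto
    have t3 : ({x 1, x 2, a} : Finset (Fin v)) = {a, x 1, x 2} := by ext; simp; tauto
    have t4 : ({x 0, x 3, a} : Finset (Fin v)) = {a, x 0, x 3} := by ext; simp; tauto
    rw [t1, t2, t3, t4]
    tauto

theorem rot3 {v : ℕ} (x y z : Fin v) : ({x, y, z} : Finset (Fin v)) = {y, z, x} := by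
  ext; simp; tauto

theorem or4 (p q r s : Prop) : (p ∨ q ∨ r ∨ s) ↔ (r ∨ s ∨ p ∨ q) := by tauto

set_option maxHeartbeats 2000000 in
theorem psw_step {v : ℕ} {S S' : STS v} (h : PSw S S') : SwitchStep {4} S S' := by
  obtain ⟨a, b, c, d, e, f, ⟨h6, h1, h2, h3, h4⟩, hS⟩ := h
  have hN := six_ne h6
  simp only [List.nodup_cons, List.mem_cons, List.not_mem_nil, or_false, not_or, ne_eq,
    not_false_eq_true, List.nodup_nil, and_true] at hN
  obtain ⟨⟨ab, ac, ad, ae, af⟩, ⟨bc, bd, be, bf⟩, ⟨cd, ce, cf⟩, ⟨de, df⟩, ef⟩ := hN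
  have e0 : ((2 * ((0 : Fin 2) : ℕ) : ℕ) : ZMod (2 * 2)) = 0 := by decide
  have e1 : ((2 * ((0 : Fin 2) : ℕ) + 1 : ℕ) : ZMod (2 * 2)) = 1 := by decide
  have e2 : ((2 * ((0 : Fin 2) : ℕ) + 2 : ℕ) : ZMod (2 * 2)) = 2 := by decide
  have f0 : ((2 * ((1 : Fin 2) : ℕ) : ℕ) : ZMod (2 * 2)) = 2 := by decide
  have f1 : ((2 * ((1 : Fin 2) : ℕ) + 1 : ℕ) : ZMod (2 * 2)) = 3 := by decide
  have f2 : ((2 * ((1 : Fin 2) : ℕ) + 2 : ℕ) : ZMod (2 * 2)) = 0 := by decide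
  obtain ⟨x, x0, x1, x2, x3⟩ : ∃ x : ZMod (2 * 2) → Fin v,
      x 0 = c ∧ x 1 = b ∧ x 2 = e ∧ x 3 = d :=
    ⟨fun i => (![c, b, e, d] : Fin 4 → Fin v) i, rfl, rfl, rfl, rfl⟩
  have hz : ∀ i : ZMod (2 * 2), i = 0 ∨ i = 1 ∨ i = 2 ∨ i = 3 := by decide
  have t1 : ({a, c, b} : Finset (Fin v)) ∈ S.blocks := by rwa [Finset.pair_comm]
  have t2 : ({a, e, d} : Finset (Fin v)) ∈ S.blocks := by rwa [Finset.pair_comm]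
  have t3 : ({f, b, e} : Finset (Fin v)) ∈ S.blocks := by
    rwa [Finset.insert_comm, Finset.pair_comm f e]
  have t4 : ({f, d, c} : Finset (Fin v)) ∈ S.blocks := by
    rwa [Finset.pair_comm, Finset.insert_comm, Finset.pair_comm f d]
  have hout : ∀ B ∈ S.blocks, a ∈ B → f ∈ B → b ∉ B ∧ c ∉ B ∧ d ∉ B ∧ e ∉ B := by
    intro B hB haB hfB
    refine ⟨fun hh => ?_, fun hh => ?_, fun hh => ?_, fun hh => ?_⟩
    · rw [block_eq S hB h1 ab haB hh (by simp) (by simp)] at hfB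
      simp at hfB
      rcases hfB with rfl | rfl | rfl <;> contradiction
    · rw [block_eq S hB h1 ac haB hh (by simp) (by simp)] at hfB
      simp at hfB
      rcases hfB with rfl | rfl | rfl <;> contradiction
    · rw [block_eq S hB h2 ad haB hh (by simp) (by simp)] at hfB
      simp at hfB
      rcases hfB with rfl | rfl | rfl <;> contradiction
    · rw [block_eq S hB h2 ae haB hh (by simp) (by simp)] at hfB
      simp at hfB
      rcases hfB with rfl | rfl | rfl <;> contradiction
  have q01 : (0 : ZMod (2 * 2)) + 1 = 1 := by decide
  have q12 : (1 : ZMod (2 * 2)) + 1 = 2 := by decide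
  have q23 : (2 : ZMod (2 * 2)) + 1 = 3 := by decide
  have q30 : (3 : ZMod (2 * 2)) + 1 = 0 := by decide
  refine ⟨a, f, 2, x, by simp, ⟨le_refl _, af, ?_, ?_, ?_⟩, ?_⟩
  · intro i j hij
    rcases hz i with rfl | rfl | rfl | rfl <;> rcases hz j with rfl | rfl | rfl | rfl <;>
      simp only [x0, x1, x2, x3] at hij <;>
      first
        | rfl
        | (subst hij; contradiction)
  · intro i
    rw [STS.cycleGraph, SimpleGraph.fromRel_adj]
    rcases hz i with rfl | rfl | rfl | rfl
    · rw [q01, x0, x1]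
      exact ⟨Ne.symm bc, Or.inl ⟨fun B hB ha hf => ⟨(hout B hB ha hf).2.1, (hout B hB ha hf).1⟩,
        Or.inl t1⟩⟩
    · rw [q12, x1, x2]
      exact ⟨be, Or.inl ⟨fun B hB ha hf => ⟨(hout B hB ha hf).1, (hout B hB ha hf).2.2.2⟩,
        Or.inr t3⟩⟩
    · rw [q23, x2, x3]
      exact ⟨Ne.symm de, Or.inl ⟨fun B hB ha hf =>
        ⟨(hout B hB ha hf).2.2.2, (hout B hB ha hf).2.2.1⟩, Or.inl t2⟩⟩
    · rw [q30, x3, x0]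
      exact ⟨Ne.symm cd, Or.inl ⟨fun B hB ha hf =>
        ⟨(hout B hB ha hf).2.2.1, (hout B hB ha hf).2.1⟩, Or.inr t4⟩⟩
  · intro j
    fin_cases j
    · show ({a, x ((2 * ((0 : Fin 2) : ℕ) : ℕ)), x ((2 * ((0 : Fin 2) : ℕ) + 1 : ℕ))} :
        Finset (Fin v)) ∈ S.blocks ∧ ({f, x ((2 * ((0 : Fin 2) : ℕ) + 1 : ℕ)),
          x ((2 * ((0 : Fin 2) : ℕ) + 2 : ℕ))} : Finset (Fin v)) ∈ S.blocks
      rw [e0, e1, e2, x0, x1, x2]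
      exact ⟨t1, t3⟩
    · show ({a, x ((2 * ((1 : Fin 2) : ℕ) : ℕ)), x ((2 * ((1 : Fin 2) : ℕ) + 1 : ℕ))} :
        Finset (Fin v)) ∈ S.blocks ∧ ({f, x ((2 * ((1 : Fin 2) : ℕ) + 1 : ℕ)),
          x ((2 * ((1 : Fin 2) : ℕ) + 2 : ℕ))} : Finset (Fin v)) ∈ S.blocks
      rw [f0, f1, f2, x0, x2, x3]
      exact ⟨t2, t4⟩
  · have hrem : removedBlocks a f 2 x = {({a, b, c} : Finset (Fin v)), {a, d, e},
        {b, e, f}, {c, d, f}} := by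
      have hu : (Finset.univ : Finset (Fin 2)) = {0, 1} := rfl
      unfold removedBlocks
      rw [hu]
      simp only [Finset.image_insert, Finset.image_singleton, e0, e1, e2, f0, f1, f2,
        x0, x1, x2, x3]
      rw [Finset.pair_comm b c, Finset.pair_comm d e,
        Finset.pair_comm e f, Finset.insert_comm b f,
        Finset.pair_comm d f, Finset.insert_comm c f, Finset.pair_comm c d]
      ext N
      simp only [Finset.mem_union, Finset.mem_insert, Finset.mem_singleton, or_assoc]
    rw [hS, switchedBlocks, paschSwitched, hrem]
    congr 1
    simp only [Finset.image_insert, Finset.image_singleton, Equiv.swap_apply_left,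
      Equiv.swap_apply_right, Equiv.swap_apply_of_ne_of_ne (Ne.symm ab) bf,
      Equiv.swap_apply_of_ne_of_ne (Ne.symm ac) cf, Equiv.swap_apply_of_ne_of_ne (Ne.symm ad) df,
      Equiv.swap_apply_of_ne_of_ne (Ne.symm ae) ef]
    ext N
    simp only [Finset.mem_insert, Finset.mem_singleton]
    rw [rot3 f b c, rot3 f d e, ← rot3 a b e, ← rot3 a c d]
    exact or4 _ _ _ _

theorem step_iff {v : ℕ} {S S' : STS v} : SwitchStep {4} S S' ↔ PSw S S' :=
  ⟨step_psw, psw_step⟩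

/-- Adjacency in the Pasch switching graph, in terms of a representative. -/
theorem adj_iff {v : ℕ} (S : STS v) (q : Quot (@STS.Iso v)) :
    (SwGraph v {4}).Adj (Quot.mk _ S) q ↔
      Quot.mk _ S ≠ q ∧ ∃ S', Quot.mk _ S' = q ∧ PSw S S' := by
  rw [SwGraph, SimpleGraph.fromRel_adj]
  refine and_congr_right fun _ => ?_
  constructor
  · have key : ∀ T T' : STS v, Quot.mk (@STS.Iso v) T = Quot.mk _ S → Quot.mk _ T' = q →
        PSw T T' → ∃ S', Quot.mk _ S' = q ∧ PSw S S' := by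
      intro T T' hT hT' h
      obtain ⟨φ, rfl⟩ := (iso_iff _ _).mp ((mk_eq _ _).mp hT)
      exact ⟨mapS φ T', hT' ▸ ((mk_eq _ _).mpr (iso_map φ T')).symm, psw_map φ h⟩
    rintro (⟨T, T', hT, hT', h⟩ | ⟨T, T', hT, hT', h⟩)
    · exact key T T' hT hT' (step_iff.mp h)
    · exact key T' T hT' hT (psw_symm (step_iff.mp h))
  · rintro ⟨S', hS', h⟩
    exact Or.inl ⟨S, S', rfl, hS', step_iff.mpr h⟩

end Sw16

namespace Sw16

/-! ### The 64 systems -/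

theorem beq_iff (a b : ℕ) : Nat.beq a b = true ↔ a = b := Nat.beq_eq ▸ Iff.rfl

theorem ble_iff (a b : ℕ) : Nat.ble a b = true ↔ a ≤ b := Nat.ble_eq ▸ Iff.rfl

theorem not_iff (a : Bool) : (not a) = true ↔ ¬ (a = true) := by cases a <;> simp

theorem sq {e x y : ℕ} (he : e < 64) (hx : x < 19) (hy : y < 19) :
    op e x y < 19 ∧ op e x x = x ∧ op e x y = op e y x ∧ op e x (op e x y) = y := by
  have h := chkSQ
  rw [allB_iff] at h
  have h1 := h e he
  rw [allB_iff] at h1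
  have h2 := h1 x hx
  rw [allB_iff] at h2
  have h3 := h2 y hy
  simp only [Bool.and_eq_true, beq_iff, ble_iff] at h3
  exact ⟨by omega, h3.2⟩

/-- The third point of the block through two points. -/
def opF (e : Fin 64) (x y : Fin 19) : Fin 19 := ⟨op e x y, (sq e.2 x.2 y.2).1⟩

theorem opF_self (e : Fin 64) (x : Fin 19) : opF e x x = x :=
  Fin.ext (sq e.2 x.2 x.2).2.1

theorem opF_comm (e : Fin 64) (x y : Fin 19) : opF e x y = opF e y x :=
  Fin.ext (sq e.2 x.2 y.2).2.2.1

theorem opF_left (e : Fin 64) (x y : Fin 19) : opF e x (opF e x y) = y :=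
  Fin.ext (sq e.2 x.2 y.2).2.2.2

theorem opF_right (e : Fin 64) (x y : Fin 19) : opF e y (opF e x y) = x := by
  rw [opF_comm e x y, opF_left]

theorem opF_ne_left {e : Fin 64} {x y : Fin 19} (h : x ≠ y) : opF e x y ≠ x := by
  intro h1
  have := opF_left e x y
  rw [h1, opF_self] at this
  exact h this

theorem opF_ne_right {e : Fin 64} {x y : Fin 19} (h : x ≠ y) : opF e x y ≠ y := by
  rw [opF_comm]; exact opF_ne_left h.symm

/-- The block through `x` and `y`. -/
def blk (e : Fin 64) (x y : Fin 19) : Finset (Fin 19) := {x, y, opF e x y}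

theorem mem_blk (e : Fin 64) (x y u : Fin 19) :
    u ∈ blk e x y ↔ u = x ∨ u = y ∨ u = opF e x y := by simp [blk]

theorem blk_comm (e : Fin 64) (x y : Fin 19) : blk e x y = blk e y x := by
  rw [blk, blk, opF_comm e y x, Finset.insert_comm]

theorem blk_third (e : Fin 64) (x y : Fin 19) : blk e x (opF e x y) = blk e x y := by
  rw [blk, blk, opF_left, Finset.pair_comm]

theorem blk_third2 (e : Fin 64) (x y : Fin 19) : blk e y (opF e x y) = blk e x y := by
  rw [opF_comm, blk_third, blk_comm]

theorem blk_eq {e : Fin 64} {x y u w : Fin 19} (h : u ≠ w) (hu : u ∈ blk e x y)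
    (hw : w ∈ blk e x y) : blk e x y = blk e u w := by
  rw [mem_blk] at hu hw
  rcases hu with rfl | rfl | rfl <;> rcases hw with rfl | rfl | rfl
  · exact absurd rfl h
  · rfl
  · rw [blk_third]
  · rw [blk_comm]
  · exact absurd rfl h
  · rw [blk_third2]
  · rw [blk_comm e _ w, blk_third]
  · rw [blk_comm e (opF e x w) w, blk_third2]
  · exact absurd rfl h

/-- System number `e`. -/
def sys (e : Fin 64) : STS 19 where
  blocks := (Finset.univ.filter fun p : Fin 19 × Fin 19 => p.1 ≠ p.2).image
    fun p => blk e p.1 p.2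
  card_blocks := by
    intro B hB
    obtain ⟨⟨x, y⟩, h, rfl⟩ := Finset.mem_image.mp hB
    have hxy : x ≠ y := (Finset.mem_filter.mp h).2
    exact Finset.card_eq_three.mpr ⟨x, y, opF e x y, hxy, (opF_ne_left hxy).symm,
      (opF_ne_right hxy).symm, rfl⟩
  covers := by
    intro x y hxy
    refine ⟨blk e x y, ⟨Finset.mem_image.mpr ⟨(x, y), by simpa using hxy, rfl⟩,
      by simp [blk], by simp [blk]⟩, ?_⟩
    rintro B ⟨hB, hx, hy⟩
    obtain ⟨⟨u, w⟩, h, rfl⟩ := Finset.mem_image.mp hB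
    exact blk_eq hxy hx hy

theorem mem_sys (e : Fin 64) (B : Finset (Fin 19)) :
    B ∈ (sys e).blocks ↔ ∃ x y, x ≠ y ∧ B = blk e x y := by
  constructor
  · intro hB
    obtain ⟨⟨x, y⟩, h, rfl⟩ := Finset.mem_image.mp hB
    exact ⟨x, y, (Finset.mem_filter.mp h).2, rfl⟩
  · rintro ⟨x, y, hxy, rfl⟩
    exact Finset.mem_image.mpr ⟨(x, y), by simpa using hxy, rfl⟩

theorem blk_mem (e : Fin 64) {x y : Fin 19} (h : x ≠ y) : blk e x y ∈ (sys e).blocks :=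
  (mem_sys _ _).mpr ⟨x, y, h, rfl⟩

theorem mem_sys3 (e : Fin 64) (x y z : Fin 19) :
    ({x, y, z} : Finset (Fin 19)) ∈ (sys e).blocks ↔ x ≠ y ∧ z = opF e x y := by
  constructor
  · intro h
    have hn := triple_ne _ h
    exact ⟨hn.1, third_unique (sys e) h (blk_mem e hn.1)⟩
  · rintro ⟨h, rfl⟩
    exact blk_mem e h

/-! ### The representatives and their Pasch configurations -/

theorem rep_lt {r : ℕ} (hr : r < 16) : rep r < 64 ∧ cls (rep r) = r := by
  have h := chkRep
  rw [allB_iff] at h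
  have h1 := h r hr
  simp only [Bool.and_eq_true, beq_iff, ble_iff] at h1
  exact ⟨by omega, h1.2⟩

theorem xor_lt {r i : ℕ} (hr : r < 16) (hi : i < 6) : Nat.xor (rep r) (Nat.pow 2 i) < 64 := by
  have h := chkXor
  rw [allB_iff] at h
  have h1 := h r hr
  rw [allB_iff] at h1
  have h2 := h1 i hi
  simp only [Bool.and_eq_true, ble_iff] at h2
  omega

theorem hp_lt {i : ℕ} (hi : i < 6) : (∀ j < 6, hp i j < 19) ∧ hp i 0 ≠ hp i 2 ∧
    hp i 0 ≠ hp i 3 ∧ hp i 1 ≠ hp i 2 ∧ hp i 1 ≠ hp i 3 := by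
  have h := chkHp
  rw [allB_iff] at h
  have h1 := h i hi
  simp only [Bool.and_eq_true, not_iff, beq_iff, allB_iff, ble_iff] at h1
  obtain ⟨h1, ⟨h2, h3⟩, h4, h5⟩ := h1
  exact ⟨fun j hj => by have := h1 j hj; omega, h2, h3, h4, h5⟩

def repF (r : Fin 16) : Fin 64 := ⟨rep r, (rep_lt r.2).1⟩
def swF (r : Fin 16) (i : Fin 6) : Fin 64 :=
  ⟨Nat.xor (rep r) (Nat.pow 2 i), xor_lt r.2 i.2⟩
def hpF (i j : Fin 6) : Fin 19 := ⟨hp i j, (hp_lt i.2).1 j j.2⟩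

/-- The representatives. -/
def rs (r : Fin 16) : STS 19 := sys (repF r)

theorem hpF_ne (i : Fin 6) : hpF i 0 ≠ hpF i 2 ∧ hpF i 0 ≠ hpF i 3 ∧ hpF i 1 ≠ hpF i 2 ∧
    hpF i 1 ≠ hpF i 3 := by
  have h := (hp_lt i.2).2
  simp only [ne_eq, Fin.ext_iff]
  exact h

/-- The Pasch configuration on hexad `i`. -/
def Q (e : Fin 64) (i : Fin 6) : Finset (Finset (Fin 19)) :=
  {blk e (hpF i 0) (hpF i 2), blk e (hpF i 0) (hpF i 3), blk e (hpF i 1) (hpF i 2),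
    blk e (hpF i 1) (hpF i 3)}

theorem inQ_iff {e : Fin 64} {i : Fin 6} {x y : Fin 19} (hxy : x ≠ y) :
    inQ e i x y = true ↔ blk e x y ∈ Q e i := by
  have hm : ∀ j : Fin 6, mem3 x y (op e x y) (hp i j) = true ↔ hpF i j ∈ blk e x y := by
    intro j
    rw [mem_blk]
    simp only [mem3, Bool.or_eq_true, beq_iff, Fin.ext_iff]
    rfl
  have h0 := hm 0
  have h1 := hm 1
  have h2 := hm 2
  have h3 := hm 3
  unfold inQ
  simp only [Bool.and_eq_true, Bool.or_eq_true]
  have e0 : hp i ((0 : Fin 6) : ℕ) = hp i 0 := rfl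
  have e1 : hp i ((1 : Fin 6) : ℕ) = hp i 1 := rfl
  have e2 : hp i ((2 : Fin 6) : ℕ) = hp i 2 := rfl
  have e3 : hp i ((3 : Fin 6) : ℕ) = hp i 3 := rfl
  rw [e0] at h0; rw [e1] at h1; rw [e2] at h2; rw [e3] at h3
  rw [h0, h1, h2, h3]
  obtain ⟨n02, n03, n12, n13⟩ := hpF_ne i
  simp only [Q, Finset.mem_insert, Finset.mem_singleton]
  constructor
  · rintro ⟨g0 | g1, g2 | g3⟩
    · exact Or.inl (blk_eq n02 g0 g2)
    · exact Or.inr (Or.inl (blk_eq n03 g0 g3))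
    · exact Or.inr (Or.inr (Or.inl (blk_eq n12 g1 g2)))
    · exact Or.inr (Or.inr (Or.inr (blk_eq n13 g1 g3)))
  · rintro (h | h | h | h) <;> rw [h] <;> simp [mem_blk]

theorem hx_iff {r : Fin 16} {i : Fin 6} {x y : Fin 19} (hxy : x ≠ y) :
    blk (repF r) x y ∈ Q (repF r) i ↔ hx x y = i := by
  have h := chkHX
  rw [allB_iff] at h
  have h1 := h r r.2
  rw [allB_iff] at h1
  have h2 := h1 i i.2
  rw [allB_iff] at h2
  have h3 := h2 x x.2
  rw [allB_iff] at h3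
  have h4 := h3 y y.2
  simp only [Bool.and_eq_true, Bool.or_eq_true, not_iff, beq_iff] at h4
  rw [← inQ_iff hxy]
  have hne : (x : ℕ) ≠ y := fun h => hxy (Fin.ext h)
  have : inQ (repF r) i x y = inQ (rep r) i x y := rfl
  rw [this]
  tauto

theorem hx_range (x y : Fin 19) : hx x y ≤ 5 ∨ hx x y = 7 := by
  have h := chkHX2
  rw [allB_iff] at h
  have h1 := h x x.2
  rw [allB_iff] at h1
  have h2 := h1 y y.2
  simpa only [Bool.or_eq_true, beq_iff, ble_iff] using h2

theorem op_sw {r : Fin 16} {i : Fin 6} {x y : Fin 19} (h : hx x y ≠ i) :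
    opF (swF r i) x y = opF (repF r) x y := by
  apply Fin.ext
  show op (Nat.xor (rep r) (Nat.pow 2 i)) x y = op (rep r) x y
  unfold op
  have : Nat.testBit (Nat.xor (rep r) (Nat.pow 2 i)) (hx x y) =
      Nat.testBit (rep r) (hx x y) := by
    show Nat.testBit ((rep r) ^^^ (2 ^ (i : ℕ))) (hx x y) = _
    rw [Nat.testBit_xor, Nat.testBit_two_pow_of_ne (Ne.symm h), Bool.xor_false]
  rw [this]

theorem pasch_card {v : ℕ} {S : STS v} {a b c d e f : Fin v} (h : PaschQuad S a b c d e f) :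
    ({({a, b, c} : Finset (Fin v)), {a, d, e}, {b, e, f}, {c, d, f}} :
      Finset (Finset (Fin v))).card = 4 := by
  have hN := six_ne h.1
  simp only [List.nodup_cons, List.mem_cons, List.not_mem_nil, or_false, not_or,
    not_false_eq_true, List.nodup_nil, and_true] at hN
  obtain ⟨⟨ab, ac, ad, ae, af⟩, ⟨bc, bd, be, bf⟩, ⟨cd, ce, cf⟩, ⟨de, df⟩, ef⟩ := hN
  have key : ∀ (B C : Finset (Fin v)) (z : Fin v), z ∈ B → z ∉ C → B ≠ C :=
    fun B C z h1 h2 h3 => h2 (h3 ▸ h1)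
  rw [Finset.card_insert_of_notMem, Finset.card_insert_of_notMem, Finset.card_pair]
  · exact key _ _ b (by simp) (by simp [bc, bd, bf])
  · simp only [Finset.mem_insert, Finset.mem_singleton, not_or]
    exact ⟨key _ _ a (by simp) (by simp [ab, ae, af]), key _ _ a (by simp) (by simp [ac, ad, af])⟩
  · simp only [Finset.mem_insert, Finset.mem_singleton, not_or]
    exact ⟨key _ _ b (by simp) (by simp [Ne.symm ab, bd, be]),
      key _ _ a (by simp) (by simp [ab, ae, af]), key _ _ a (by simp) (by simp [ac, ad, af])⟩

theorem pasch_lt {r : Fin 16} {a b c d p f : Fin 19} (h : PaschQuad (rs r) a b c d p f)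
    (hbd : b < d) : ∃ i : Fin 6,
      ({({a, b, c} : Finset (Fin 19)), {a, d, p}, {b, p, f}, {c, d, f}} :
        Finset (Finset (Fin 19))) = Q (repF r) i ∧
      (sys (swF r i)).blocks = paschSwitched (rs r) a b c d p f := by
  have hP := h
  have h4 := pasch_card h
  obtain ⟨h6, h1, h2, h3, h5⟩ := h
  have hN := six_ne h6
  simp only [List.nodup_cons, List.mem_cons, List.not_mem_nil, or_false, not_or,
    not_false_eq_true, List.nodup_nil, and_true] at hN
  obtain ⟨⟨ab, ac, ad, ap, af⟩, ⟨bc, bd, bp, bf⟩, ⟨cd, cp, cf⟩, ⟨dp, df⟩, pf⟩ := hN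
  have ec := ((mem_sys3 _ _ _ _).mp h1).2
  have ep := ((mem_sys3 _ _ _ _).mp h2).2
  have ef := ((mem_sys3 _ _ _ _).mp h3).2
  have ef2 := ((mem_sys3 _ _ _ _).mp h5).2
  have ec' : op (rep r) a b = c := (congrArg Fin.val ec).symm
  have ep' : op (rep r) a d = p := (congrArg Fin.val ep).symm
  have ef' : op (rep r) b p = f := (congrArg Fin.val ef).symm
  have ef2' : op (rep r) c d = f := (congrArg Fin.val ef2).symm
  have g := chkPasch
  rw [allB_iff] at g
  have g1 := g r r.2
  rw [allB_iff] at g1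
  have g2 := g1 a a.2
  rw [allB_iff] at g2
  have g3 := g2 d d.2
  rw [allB_iff] at g3
  have g4 := g3 b hbd
  rw [ec', ep', ef', ef2'] at g4
  simp only [Bool.or_eq_true, not_iff, beq_iff, anyB_iff, not_true_eq_false, false_or, mem3] at g4
  rcases g4 with g4 | (g4 | g4 | g4) | ⟨i, hi, g4⟩
  · exact absurd (Fin.ext g4) ab
  · exact absurd (Fin.ext g4).symm ad
  · exact absurd (Fin.ext g4).symm bd
  · exact absurd (Fin.ext g4).symm cd
  simp only [hit, Bool.and_eq_true, beq_iff] at g4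
  obtain ⟨k1, k2, k3, k4, m1, m2, m3, m4⟩ := g4
  have q1 : blk (repF r) a b ∈ Q (repF r) ⟨i, hi⟩ := (inQ_iff ab).mp k1
  have q2 : blk (repF r) a d ∈ Q (repF r) ⟨i, hi⟩ := (inQ_iff ad).mp k2
  have q3 : blk (repF r) b p ∈ Q (repF r) ⟨i, hi⟩ := (inQ_iff bp).mp k3
  have q4 : blk (repF r) c d ∈ Q (repF r) ⟨i, hi⟩ := (inQ_iff cd).mp k4
  unfold blk at q1 q2 q3 q4
  rw [← ec] at q1
  rw [← ep] at q2
  rw [← ef] at q3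
  rw [← ef2] at q4
  have hQ : ({({a, b, c} : Finset (Fin 19)), {a, d, p}, {b, p, f}, {c, d, f}} :
        Finset (Finset (Fin 19))) = Q (repF r) ⟨i, hi⟩ := by
    apply Finset.eq_of_subset_of_card_le
    · intro B hB
      simp only [Finset.mem_insert, Finset.mem_singleton] at hB
      rcases hB with rfl | rfl | rfl | rfl
      · exact q1
      · exact q2
      · exact q3
      · exact q4
    · rw [h4]; exact Finset.card_le_four
  refine ⟨⟨i, hi⟩, hQ, switched_eq hP ?_⟩
  intro N hN
  unfold paschSwitched at hN
  rw [hQ] at hN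
  rcases Finset.mem_union.mp hN with hN | hN
  · obtain ⟨hN1, hN2⟩ := Finset.mem_sdiff.mp hN
    obtain ⟨x, y, hxy, rfl⟩ := (mem_sys _ _).mp hN1
    rw [hx_iff hxy] at hN2
    refine (mem_sys _ _).mpr ⟨x, y, hxy, ?_⟩
    unfold blk
    rw [op_sw hN2]
  · simp only [Finset.mem_insert, Finset.mem_singleton] at hN
    rcases hN with rfl | rfl | rfl | rfl
    · exact (mem_sys3 _ _ _ _).mpr ⟨ab, Fin.ext m1.symm⟩
    · exact (mem_sys3 _ _ _ _).mpr ⟨ac, Fin.ext m2.symm⟩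
    · exact (mem_sys3 _ _ _ _).mpr ⟨bc, Fin.ext m3.symm⟩
    · exact (mem_sys3 _ _ _ _).mpr ⟨dp, Fin.ext m4.symm⟩

theorem or4b (p q r s : Prop) : (p ∨ q ∨ r ∨ s) ↔ (q ∨ p ∨ s ∨ r) := by tauto

theorem pasch_hit {r : Fin 16} {a b c d p f : Fin 19} (h : PaschQuad (rs r) a b c d p f) :
    ∃ i : Fin 6,
      ({({a, b, c} : Finset (Fin 19)), {a, d, p}, {b, p, f}, {c, d, f}} :
        Finset (Finset (Fin 19))) = Q (repF r) i ∧
      (sys (swF r i)).blocks = paschSwitched (rs r) a b c d p f := by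
  have hN := six_ne h.1
  have hbd : b ≠ d := by simp at hN; tauto
  rcases lt_or_gt_of_ne hbd with h1 | h1
  · exact pasch_lt h h1
  · have e1 : ({c, d, f} : Finset (Fin 19)) = {d, c, f} := Finset.insert_comm _ _ _
    have e2 : ({b, p, f} : Finset (Fin 19)) = {p, b, f} := Finset.insert_comm _ _ _
    have e3 : ({a, b, p} : Finset (Fin 19)) = {a, p, b} := by rw [Finset.pair_comm]
    have e4 : ({a, d, c} : Finset (Fin 19)) = {a, c, d} := by rw [Finset.pair_comm]
    have e5 : ({d, p, f} : Finset (Fin 19)) = {d, p, f} := rfl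
    have e6 : ({b, c, f} : Finset (Fin 19)) = {b, c, f} := rfl
    have hP : PaschQuad (rs r) a d p b c f := by
      obtain ⟨-, h1, h2, h3, h5⟩ := h
      refine ⟨six_card ?_, h2, h1, e1 ▸ h5, e2 ▸ h3⟩
      clear h1 h2 h3 h5 e1 e2 e3 e4 e5 e6
      simp only [List.nodup_cons, List.mem_cons, List.not_mem_nil, or_false, not_or,
        not_false_eq_true, List.nodup_nil, and_true] at hN ⊢
      obtain ⟨⟨ab, ac, ad, ap, af⟩, ⟨bc, bd, bp, bf⟩, ⟨cd, cp, cf⟩, ⟨dp, df⟩, pf⟩ := hN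
      exact ⟨⟨ad, ap, ab, ac, af⟩, ⟨dp, Ne.symm bd, Ne.symm cd, df⟩,
        ⟨Ne.symm bp, Ne.symm cp, pf⟩, ⟨bc, bf⟩, cf⟩
    have s1 : ({({a, b, c} : Finset (Fin 19)), {a, d, p}, {b, p, f}, {c, d, f}} :
        Finset (Finset (Fin 19))) = {{a, d, p}, {a, b, c}, {d, c, f}, {p, b, f}} := by
      ext N
      simp only [Finset.mem_insert, Finset.mem_singleton]
      rw [e1, e2]
      exact or4b _ _ _ _
    have s2 : ({({a, b, p} : Finset (Fin 19)), {a, c, d}, {b, c, f}, {d, p, f}} :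
        Finset (Finset (Fin 19))) = {{a, d, c}, {a, p, b}, {d, p, f}, {b, c, f}} := by
      ext N
      simp only [Finset.mem_insert, Finset.mem_singleton]
      rw [e3, e4]
      exact or4b _ _ _ _
    obtain ⟨i, hi1, hi2⟩ := pasch_lt hP h1
    refine ⟨i, s1.trans hi1, ?_⟩
    rw [hi2]
    unfold paschSwitched
    rw [s1, s2]

theorem chkQP : (allB 16 fun r => allB 6 fun i =>
    and (Nat.beq (op (rep r) (hp i 2) (op (rep r) (hp i 0) (hp i 3))) (hp i 1))
    (and (Nat.beq (op (rep r) (op (rep r) (hp i 0) (hp i 2)) (hp i 3)) (hp i 1))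
    (decide [hp i 0, hp i 2, op (rep r) (hp i 0) (hp i 2), hp i 3,
      op (rep r) (hp i 0) (hp i 3), hp i 1].Nodup))) = true := by
  decide +kernel

theorem quad_Q (r : Fin 16) (i : Fin 6) : PaschQuad (rs r) (hpF i 0) (hpF i 2)
    (opF (repF r) (hpF i 0) (hpF i 2)) (hpF i 3) (opF (repF r) (hpF i 0) (hpF i 3)) (hpF i 1) := by
  have h := chkQP
  rw [allB_iff] at h
  have h1 := h r r.2
  rw [allB_iff] at h1
  have h2 := h1 i i.2
  simp only [Bool.and_eq_true, beq_iff] at h2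
  obtain ⟨h3, h4, h5⟩ := h2
  have h5 := of_decide_eq_true h5
  have hn : [hpF i 0, hpF i 2, opF (repF r) (hpF i 0) (hpF i 2), hpF i 3,
      opF (repF r) (hpF i 0) (hpF i 3), hpF i 1].Nodup :=
    List.Nodup.of_map Fin.val h5
  refine ⟨six_card hn, ?_, ?_, ?_, ?_⟩
  · exact (mem_sys3 _ _ _ _).mpr ⟨(hpF_ne i).1, rfl⟩
  · exact (mem_sys3 _ _ _ _).mpr ⟨(hpF_ne i).2.1, rfl⟩
  · exact (mem_sys3 _ _ _ _).mpr ⟨by simp at hn; tauto, Fin.ext h3.symm⟩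
  · exact (mem_sys3 _ _ _ _).mpr ⟨by simp at hn; tauto, Fin.ext h4.symm⟩

theorem Q_inj {r : Fin 16} {i j : Fin 6} {B : Finset (Fin 19)} (hi : B ∈ Q (repF r) i)
    (hj : B ∈ Q (repF r) j) : i = j := by
  have : ∃ x y, x ≠ y ∧ B = blk (repF r) x y := by
    obtain ⟨n02, n03, n12, n13⟩ := hpF_ne i
    simp only [Q, Finset.mem_insert, Finset.mem_singleton] at hi
    rcases hi with h | h | h | h
    · exact ⟨_, _, n02, h⟩
    · exact ⟨_, _, n03, h⟩
    · exact ⟨_, _, n12, h⟩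
    · exact ⟨_, _, n13, h⟩
  obtain ⟨x, y, hxy, rfl⟩ := this
  rw [hx_iff hxy] at hi hj
  exact Fin.ext (hi.symm.trans hj)

theorem Q_pasch (r : Fin 16) (i : Fin 6) :
    IsPaschConfig (rs r) (Q (repF r) i) ∧ PSw (rs r) (sys (swF r i)) := by
  have hP := quad_Q r i
  obtain ⟨j, hj1, hj2⟩ := pasch_hit hP
  have hij : i = j := by
    have h1 : blk (repF r) (hpF i 0) (hpF i 2) ∈ Q (repF r) i := by simp [Q]
    have h2 : blk (repF r) (hpF i 0) (hpF i 2) ∈ Q (repF r) j := by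
      rw [← hj1]; simp [blk]
    exact Q_inj h1 h2
  subst hij
  exact ⟨⟨_, _, _, _, _, _, hP, hj1.symm⟩, ⟨_, _, _, _, _, _, hP, hj2⟩⟩

theorem pasch_iff (r : Fin 16) (P : Finset (Finset (Fin 19))) :
    IsPaschConfig (rs r) P ↔ ∃ i, P = Q (repF r) i := by
  constructor
  · rintro ⟨a, b, c, d, e, f, h, rfl⟩
    obtain ⟨i, hi, -⟩ := pasch_hit h
    exact ⟨i, hi⟩
  · rintro ⟨i, rfl⟩
    exact (Q_pasch r i).1

theorem psw_iff (r : Fin 16) (S' : STS 19) :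
    PSw (rs r) S' ↔ ∃ i, S' = sys (swF r i) := by
  constructor
  · rintro ⟨a, b, c, d, e, f, h, hS⟩
    obtain ⟨i, -, hi⟩ := pasch_hit h
    exact ⟨i, sts_ext (hS.trans hi.symm)⟩
  · rintro ⟨i, rfl⟩
    exact (Q_pasch r i).2

theorem Q_card (r : Fin 16) (i : Fin 6) : (Q (repF r) i).card = 4 := by
  obtain ⟨a, b, c, d, e, f, h, hQ⟩ := (Q_pasch r i).1
  rw [hQ]
  exact pasch_card h

end Sw16

namespace Sw16

/-! ### Facts on the Pasch configurations of the systems in the classes -/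

theorem pasch_map {v : ℕ} (φ : Equiv.Perm (Fin v)) {S : STS v} {P : Finset (Finset (Fin v))}
    (h : IsPaschConfig S P) : IsPaschConfig (mapS φ S) (P.image (Finset.image φ)) := by
  obtain ⟨a, b, c, d, e, f, hP, rfl⟩ := h
  refine ⟨φ a, φ b, φ c, φ d, φ e, φ f, quad_map φ hP, ?_⟩
  simp [Finset.image_insert]

theorem mapS_symm {v : ℕ} (φ : Equiv.Perm (Fin v)) (S : STS v) :
    mapS φ.symm (mapS φ S) = S := by
  apply sts_ext
  show (S.blocks.image (Finset.image φ)).image (Finset.image φ.symm) = S.blocks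
  rw [Finset.image_image]
  have : (Finset.image φ.symm ∘ Finset.image φ : Finset (Fin v) → Finset (Fin v)) = id := by
    funext B
    simp [Finset.image_image]
  rw [this, Finset.image_id]

theorem pasch_map_iff {v : ℕ} (φ : Equiv.Perm (Fin v)) (S : STS v)
    (P : Finset (Finset (Fin v))) :
    IsPaschConfig (mapS φ S) P ↔ ∃ P', IsPaschConfig S P' ∧ P = P'.image (Finset.image φ) := by
  constructor
  · intro h
    have h1 := pasch_map φ.symm h
    rw [mapS_symm] at h1
    refine ⟨_, h1, ?_⟩
    rw [Finset.image_image]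
    have : (Finset.image φ ∘ Finset.image φ.symm : Finset (Fin v) → Finset (Fin v)) = id := by
      funext B
      simp [Finset.image_image]
    rw [this, Finset.image_id]
  · rintro ⟨P', h, rfl⟩
    exact pasch_map φ h

/-- Pasch configurations of a relabelled representative. -/
theorem pasch_all (r : Fin 16) (φ : Equiv.Perm (Fin 19)) (P : Finset (Finset (Fin 19))) :
    IsPaschConfig (mapS φ (rs r)) P ↔ ∃ i, P = (Q (repF r) i).image (Finset.image φ) := by
  rw [pasch_map_iff]
  constructor
  · rintro ⟨P', h, rfl⟩
    obtain ⟨i, rfl⟩ := (pasch_iff r P').mp h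
    exact ⟨i, rfl⟩
  · rintro ⟨i, rfl⟩
    exact ⟨_, (pasch_iff r _).mpr ⟨i, rfl⟩, rfl⟩

theorem Qim_inj (r : Fin 16) (φ : Equiv.Perm (Fin 19)) {i j : Fin 6} {B : Finset (Fin 19)}
    (hi : B ∈ (Q (repF r) i).image (Finset.image φ))
    (hj : B ∈ (Q (repF r) j).image (Finset.image φ)) : i = j := by
  obtain ⟨C, hC, rfl⟩ := Finset.mem_image.mp hi
  obtain ⟨D, hD, hE⟩ := Finset.mem_image.mp hj
  have := image_inj φ hE
  subst this
  exact Q_inj hC hD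

theorem Qim_card (r : Fin 16) (φ : Equiv.Perm (Fin 19)) (i : Fin 6) :
    ((Q (repF r) i).image (Finset.image φ)).card = 4 := by
  rw [Finset.card_image_of_injective _ (image_inj φ), Q_card]

theorem six_pasch (r : Fin 16) (φ : Equiv.Perm (Fin 19)) :
    Nat.card {P : Finset (Finset (Fin 19)) // IsPaschConfig (mapS φ (rs r)) P} = 6 := by
  have : Function.Bijective (fun i : Fin 6 =>
      (⟨(Q (repF r) i).image (Finset.image φ), (pasch_all r φ _).mpr ⟨i, rfl⟩⟩ :
        {P : Finset (Finset (Fin 19)) // IsPaschConfig (mapS φ (rs r)) P})) := by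
    constructor
    · intro i j hij
      have h1 := congrArg Subtype.val hij
      simp only at h1
      have hne : ((Q (repF r) i).image (Finset.image φ)).Nonempty := by
        rw [← Finset.card_pos, Qim_card]; norm_num
      obtain ⟨B, hB⟩ := hne
      exact Qim_inj r φ hB (h1 ▸ hB)
    · rintro ⟨P, hP⟩
      obtain ⟨i, rfl⟩ := (pasch_all r φ P).mp hP
      exact ⟨i, rfl⟩
  rw [← Nat.card_congr (Equiv.ofBijective _ this)]
  simp

theorem disj_pasch (r : Fin 16) (φ : Equiv.Perm (Fin 19)) (P P' : Finset (Finset (Fin 19)))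
    (hP : IsPaschConfig (mapS φ (rs r)) P) (hP' : IsPaschConfig (mapS φ (rs r)) P')
    (h : P ≠ P') : Disjoint P P' := by
  obtain ⟨i, rfl⟩ := (pasch_all r φ P).mp hP
  obtain ⟨j, rfl⟩ := (pasch_all r φ P').mp hP'
  rw [Finset.disjoint_left]
  intro B hB hB'
  exact h (by rw [Qim_inj r φ hB hB'])

theorem blocks_pasch (r : Fin 16) (φ : Equiv.Perm (Fin 19)) :
    Set.ncard {B : Finset (Fin 19) | ∃ P, IsPaschConfig (mapS φ (rs r)) P ∧ B ∈ P} = 24 := by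
  have : {B : Finset (Fin 19) | ∃ P, IsPaschConfig (mapS φ (rs r)) P ∧ B ∈ P} =
      ((Finset.univ.biUnion fun i : Fin 6 => (Q (repF r) i).image (Finset.image φ) :
        Finset (Finset (Fin 19))) : Set (Finset (Fin 19))) := by
    ext B
    simp only [Set.mem_setOf_eq, Finset.mem_coe, Finset.mem_biUnion, Finset.mem_univ, true_and]
    constructor
    · rintro ⟨P, hP, hB⟩
      obtain ⟨i, rfl⟩ := (pasch_all r φ P).mp hP
      exact ⟨i, hB⟩
    · rintro ⟨i, hB⟩
      exact ⟨_, (pasch_all r φ _).mpr ⟨i, rfl⟩, hB⟩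
  rw [this, Set.ncard_coe_finset, Finset.card_biUnion]
  · simp only [Qim_card]; simp
  · intro i _ j _ hij
    rw [Function.onFun, Finset.disjoint_left]
    intro B hB hB'
    exact hij (Qim_inj r φ hB hB')

theorem chkPts : (allB 19 fun z => or (and (Nat.beq z 18) (allB 18 fun y => Nat.beq (hx z y) 7))
    (and (not (Nat.beq z 18)) (anyB 19 fun y => and (not (Nat.beq z y)) (Nat.ble (hx z y) 5)))) =
      true := by
  decide +kernel

theorem pts_iff (r : Fin 16) (z : Fin 19) :
    (∃ i, ∃ B ∈ Q (repF r) i, z ∈ B) ↔ z ≠ 18 := by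
  have h := chkPts
  rw [allB_iff] at h
  have h1 := h z z.2
  simp only [Bool.and_eq_true, Bool.or_eq_true, not_iff, beq_iff, ble_iff, allB_iff, anyB_iff] at h1
  constructor
  · rintro ⟨i, B, hB, hz⟩ h18
    have hBm : B ∈ (rs r).blocks := by
      obtain ⟨n02, n03, n12, n13⟩ := hpF_ne i
      simp only [Q, Finset.mem_insert, Finset.mem_singleton] at hB
      rcases hB with rfl | rfl | rfl | rfl
      · exact blk_mem _ n02
      · exact blk_mem _ n03
      · exact blk_mem _ n12
      · exact blk_mem _ n13
    have h3 := (rs r).card_blocks B hBm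
    obtain ⟨y, hy, hyz⟩ := Finset.exists_mem_ne (by omega : 1 < B.card) z
    obtain ⟨u, w, huw, rfl⟩ := (mem_sys _ _).mp hBm
    rw [blk_eq hyz.symm hz hy, hx_iff hyz.symm] at hB
    have hzv : (z : ℕ) = 18 := by rw [h18]; rfl
    rcases h1 with ⟨-, h1⟩ | ⟨h1, -⟩
    · have hy' : (y : ℕ) ≠ 18 := fun h => hyz (Fin.ext (h.trans hzv.symm))
      have := h1 y (by omega)
      omega
    · exact h1 hzv
  · intro hz
    have hzv : (z : ℕ) ≠ 18 := fun h => hz (Fin.ext h)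
    rcases h1 with ⟨h1, -⟩ | ⟨-, y, hy, hne, hle⟩
    · exact absurd h1 hzv
    · have hzy : z ≠ (⟨y, hy⟩ : Fin 19) := fun h => hne (congrArg Fin.val h)
      exact ⟨⟨hx z y, by omega⟩, blk (repF r) z ⟨y, hy⟩, (hx_iff hzy).mpr rfl, by simp [mem_blk]⟩

theorem points_pasch (r : Fin 16) (φ : Equiv.Perm (Fin 19)) :
    Set.ncard {z : Fin 19 | ∃ P, IsPaschConfig (mapS φ (rs r)) P ∧ ∃ B ∈ P, z ∈ B} = 18 := by
  have : {z : Fin 19 | ∃ P, IsPaschConfig (mapS φ (rs r)) P ∧ ∃ B ∈ P, z ∈ B} =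
      φ '' (((Finset.univ.erase 18 : Finset (Fin 19))) : Set (Fin 19)) := by
    ext z
    simp only [Set.mem_setOf_eq, Set.mem_image, Finset.mem_coe, Finset.mem_erase,
      Finset.mem_univ, and_true]
    constructor
    · rintro ⟨P, hP, B, hB, hz⟩
      obtain ⟨i, rfl⟩ := (pasch_all r φ P).mp hP
      obtain ⟨C, hC, rfl⟩ := Finset.mem_image.mp hB
      obtain ⟨w, hw, rfl⟩ := Finset.mem_image.mp hz
      exact ⟨w, (pts_iff r w).mp ⟨i, C, hC, hw⟩, rfl⟩
    · rintro ⟨w, hw, rfl⟩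
      obtain ⟨i, C, hC, hw⟩ := (pts_iff r w).mpr hw
      exact ⟨_, (pasch_all r φ _).mpr ⟨i, rfl⟩, _, Finset.mem_image_of_mem _ hC,
        Finset.mem_image_of_mem _ hw⟩
  rw [this, Set.ncard_image_of_injective _ φ.injective, Set.ncard_coe_finset]
  simp

/-! ### Rigidity -/

/-- Third points of the pairs outside all hexads. -/
def fx (x y : ℕ) : ℕ := ent tabA 5 (Nat.add (Nat.mul 19 x) y)

/-- The pair is outside all hexads. -/
def ok (x y : ℕ) : Bool := and (not (Nat.beq x y)) (Nat.beq (hx x y) 7)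

def look (l : List ℕ) (i : ℕ) : ℕ := l.getD i 0

/-- Run a straight line program: each step `(i, j, k)` forms the third point on entries `i`, `j`;
it is appended if `k` is the length of the list, and compared with entry `k` otherwise. -/
def run : List (ℕ × ℕ × ℕ) → List ℕ → Option (List ℕ)
  | [], env => some env
  | (i, j, k) :: t, env =>
    bif ok (look env i) (look env j) then
      bif Nat.beq k env.length then run t (env ++ [fx (look env i) (look env j)])
      else bif Nat.beq (look env k) (fx (look env i) (look env j)) then run t env else none
    else none

def prog : List (ℕ × ℕ × ℕ) :=
  [(1,0,3),(2,0,4),(2,1,5),(3,2,6),(4,5,6),(4,1,7),(4,3,8),(5,0,9),(5,3,10),(2,7,10),(8,9,10),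
  (6,0,11),(3,9,11),(7,0,12),(6,10,12),(7,3,13),(1,10,13),(4,9,13),(7,5,14),(10,11,14),(2,9,14),
  (1,12,14),(6,8,14),(8,0,15),(13,14,15),(4,11,15),(3,12,15),(11,8,16),(0,13,16),(3,14,16),
  (10,15,16),(4,12,16)]

def env1 : List ℕ := [0, 13, 5, 18, 7, 15, 10, 2, 14, 11, 6, 4, 9, 8, 1, 3, 12]
def env2 : List ℕ := [1, 12, 4, 18, 6, 14, 11, 3, 15, 10, 7, 5, 8, 9, 0, 2, 13]

theorem chkRun1 : run prog [0, 13, 5] = some env1 := by decide +kernel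

def isGood : Option (List ℕ) → Bool
  | none => true
  | some l => or (decide (l = env1)) (decide (l = env2))

theorem chkRun : (allB 19 fun u => allB 19 fun w => allB 19 fun z =>
    isGood (run prog [u, w, z])) = true := by
  decide +kernel

theorem fx_lt (e : Fin 64) (x y : Fin 19) (h : hx x y = 7) : fx x y = opF e x y := by
  show _ = op e x y
  unfold op
  rw [h]
  have : Nat.testBit e 7 = false := by
    apply Nat.testBit_lt_two_pow
    have := e.2
    omega
  rw [this]
  rfl

/-- `f` preserves the partial operation on the pairs outside all hexads. -/
def Pres (f : ℕ → ℕ) : Prop :=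
  ∀ x < 19, ∀ y < 19, ok x y = true → ok (f x) (f y) = true ∧ fx (f x) (f y) = f (fx x y)

theorem look_map {f : ℕ → ℕ} {l : List ℕ} {i : ℕ} (h : i < l.length) :
    look (l.map f) i = f (look l i) := by
  simp [look, List.getD_eq_getElem?_getD, h]

theorem look_lt {l : List ℕ} {i : ℕ} (hl : ∀ x ∈ l, x < 19) : look l i < 19 := by
  unfold look
  rw [List.getD_eq_getElem?_getD]
  by_cases h : i < l.length
  · simp only [h, List.getElem?_eq_getElem, Option.getD_some]
    exact hl _ (List.getElem_mem h)
  · simp [List.getElem?_eq_none (by omega : l.length ≤ i)]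

theorem ok_lt {x y : ℕ} (hx' : x < 19) (hy : y < 19) (h : ok x y = true) : fx x y < 19 := by
  simp only [ok, Bool.and_eq_true, beq_iff] at h
  rw [fx_lt 0 ⟨x, hx'⟩ ⟨y, hy⟩ h.2]
  exact (opF 0 _ _).2

/-- All indices used by the program are in range. -/
def wf : ℕ → List (ℕ × ℕ × ℕ) → Bool
  | _, [] => true
  | n, (i, j, k) :: t => and (Nat.blt i n) (and (Nat.blt j n) (and (Nat.ble k n)
      (wf (bif Nat.beq k n then n + 1 else n) t)))

theorem run_map {f : ℕ → ℕ} (hf : Pres f) (p : List (ℕ × ℕ × ℕ)) :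
    ∀ (env env' : List ℕ), (∀ x ∈ env, x < 19) → wf env.length p = true →
      run p env = some env' → run p (env.map f) = some (env'.map f) := by
  induction p with
  | nil =>
    intro env env' _ _ h
    simp only [run, Option.some.injEq] at h ⊢
    rw [h]
  | cons s t ih =>
    obtain ⟨i, j, k⟩ := s
    intro env env' hl hw h
    simp only [wf, Bool.and_eq_true, Nat.blt_eq, ble_iff] at hw
    obtain ⟨hi, hj, hk, hw⟩ := hw
    simp only [run] at h ⊢
    rw [look_map hi, look_map hj, List.length_map]
    have li := look_lt (i := i) hl
    have lj := look_lt (i := j) hl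
    cases hok : ok (look env i) (look env j) with
    | false => rw [hok] at h; simp at h
    | true =>
      obtain ⟨h1, h2⟩ := hf _ li _ lj hok
      rw [hok] at h
      rw [h1, h2]
      simp only [cond_true] at h ⊢
      cases hkn : Nat.beq k env.length with
      | true =>
        rw [hkn] at h hw
        simp only [cond_true] at h hw ⊢
        have := ih (env ++ [fx (look env i) (look env j)]) env' ?_ (by simpa using hw) h
        · simpa using this
        · intro x hx
          rcases List.mem_append.mp hx with hx | hx
          · exact hl x hx
          · rw [List.mem_singleton.mp hx]; exact ok_lt li lj hok
      | false =>
        rw [hkn] at h hw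
        simp only [cond_false] at h hw ⊢
        have hk' : k < env.length := by
          rcases Nat.lt_or_eq_of_le hk with h | h
          · exact h
          · rw [(beq_iff _ _).mpr h] at hkn; simp at hkn
        rw [look_map hk']
        cases hkk : Nat.beq (look env k) (fx (look env i) (look env j)) with
        | false => rw [hkk] at h; simp at h
        | true =>
          rw [hkk] at h
          rw [(beq_iff _ _).mp hkk, (beq_iff _ _).mpr rfl]
          simp only [cond_true] at h ⊢
          exact ih env env' hl hw h

theorem rigid {f : ℕ → ℕ} (hf : Pres f) (h19 : ∀ x < 19, f x < 19) :
    env1.map f = env1 ∨ env1.map f = env2 := by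
  have h := run_map hf prog [0, 13, 5] env1 (by decide) (by decide) chkRun1
  have g := chkRun
  rw [allB_iff] at g
  have g1 := g (f 0) (h19 0 (by norm_num))
  rw [allB_iff] at g1
  have g2 := g1 (f 13) (h19 13 (by norm_num))
  rw [allB_iff] at g2
  have g3 := g2 (f 5) (h19 5 (by norm_num))
  simp only [List.map_cons, List.map_nil] at h
  rw [h] at g3
  simpa only [isGood, Bool.or_eq_true, decide_eq_true_eq] using g3

end Sw16

namespace Sw16

theorem map_op {r s : Fin 16} {φ : Equiv.Perm (Fin 19)} (h : mapS φ (rs r) = rs s)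
    (x y : Fin 19) : φ (opF (repF r) x y) = opF (repF s) (φ x) (φ y) := by
  by_cases hxy : x = y
  · subst hxy
    rw [opF_self, opF_self]
  · have h1 : ({x, y, opF (repF r) x y} : Finset (Fin 19)) ∈ (rs r).blocks := blk_mem _ hxy
    rw [← mem_mapS3 φ, h] at h1
    exact ((mem_sys3 _ _ _ _).mp h1).2

theorem map_hx {r s : Fin 16} {φ : Equiv.Perm (Fin 19)} (h : mapS φ (rs r) = rs s)
    {x y : Fin 19} (hxy : x ≠ y) (h7 : hx x y = 7) : hx (φ x) (φ y) = 7 := by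
  rcases hx_range (φ x) (φ y) with h5 | h5
  · exfalso
    have hne : φ x ≠ φ y := fun h => hxy (φ.injective h)
    have h1 : blk (repF s) (φ x) (φ y) ∈ Q (repF s) ⟨hx (φ x) (φ y), by omega⟩ :=
      (hx_iff hne).mpr rfl
    have h2 := (pasch_iff s _).mpr ⟨⟨hx (φ x) (φ y), by omega⟩, rfl⟩
    rw [← h] at h2
    obtain ⟨j, hj⟩ := (pasch_all r φ _).mp h2
    rw [hj] at h1
    have h3 : blk (repF s) (φ x) (φ y) = (blk (repF r) x y).image φ := by
      simp [blk, Finset.image_insert, map_op h]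
    rw [h3] at h1
    obtain ⟨C, hC, hE⟩ := Finset.mem_image.mp h1
    rw [image_inj φ hE, hx_iff hxy, h7] at hC
    have := j.2
    omega
  · exact h5

theorem chkE : (allB 19 fun x => or (or (Nat.beq x 16) (Nat.beq x 17))
    (and (decide (x ∈ env1)) (decide (x ∈ env2)))) = true := by decide +kernel

theorem memE {x : ℕ} (h : x < 19) : (x = 16 ∨ x = 17) ∨ (x ∈ env1 ∧ x ∈ env2) := by
  have g := chkE
  rw [allB_iff] at g
  simpa only [Bool.and_eq_true, Bool.or_eq_true, beq_iff, decide_eq_true_eq] using g x h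

/-- Isomorphisms between representatives are among four permutations. -/
theorem four {f : ℕ → ℕ} (hf : Pres f) (h19 : ∀ x < 19, f x < 19)
    (hinj : ∀ x < 19, ∀ y < 19, f x = f y → x = y) :
    ∃ k < 4, ∀ x < 19, f x = pm k x := by
  have h := rigid hf h19
  have hlt : ∀ x ∈ env1, x < 19 := by decide
  have h16 : 16 ∉ env1 := by decide
  have h17 : 17 ∉ env1 := by decide
  have key : ∀ y < 19, y ∉ env1 → f y = 16 ∨ f y = 17 := by
    intro y hy hy1
    rcases memE (h19 y hy) with h1 | ⟨h1, h2⟩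
    · exact h1
    · exfalso
      have : f y ∈ env1.map f := by
        rcases h with h | h <;> rw [h] <;> assumption
      obtain ⟨x, hx, hxy⟩ := List.mem_map.mp this
      exact hy1 (hinj x (hlt x hx) y hy hxy ▸ hx)
  have k16 := key 16 (by norm_num) h16
  have k17 := key 17 (by norm_num) h17
  have kne : f 16 ≠ f 17 := fun h => absurd (hinj 16 (by norm_num) 17 (by norm_num) h) (by norm_num)
  have fin : ∀ k, env1.map f = env1.map (pm k) → f 16 = pm k 16 → f 17 = pm k 17 →
      ∀ x < 19, f x = pm k x := by
    intro k h0 h1 h2 x hx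
    rcases memE hx with (rfl | rfl) | ⟨h3, -⟩
    · exact h1
    · exact h2
    · exact List.map_inj_left.mp h0 x h3
  have p0 : env1.map (pm 0) = env1 ∧ pm 0 16 = 16 ∧ pm 0 17 = 17 := by decide +kernel
  have p1 : env1.map (pm 1) = env1 ∧ pm 1 16 = 17 ∧ pm 1 17 = 16 := by decide +kernel
  have p2 : env1.map (pm 2) = env2 ∧ pm 2 16 = 16 ∧ pm 2 17 = 17 := by decide +kernel
  have p3 : env1.map (pm 3) = env2 ∧ pm 3 16 = 17 ∧ pm 3 17 = 16 := by decide +kernel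
  rcases h with h | h <;> rcases k16 with a | a
  · exact ⟨0, by norm_num, fin 0 (h.trans p0.1.symm) (by omega) (by omega)⟩
  · exact ⟨1, by norm_num, fin 1 (h.trans p1.1.symm) (by omega) (by omega)⟩
  · exact ⟨2, by norm_num, fin 2 (h.trans p2.1.symm) (by omega) (by omega)⟩
  · exact ⟨3, by norm_num, fin 3 (h.trans p3.1.symm) (by omega) (by omega)⟩

theorem pm_zero : (allB 19 fun x => Nat.beq (pm 0 x) x) = true := by decide +kernel

theorem iso_rs {r s : Fin 16} {φ : Equiv.Perm (Fin 19)} (h : mapS φ (rs r) = rs s) :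
    r = s ∧ φ = Equiv.refl _ := by
  obtain ⟨f, hfd⟩ : ∃ f : ℕ → ℕ, ∀ x : Fin 19, f x = φ x :=
    ⟨fun x => if h : x < 19 then (φ ⟨x, h⟩ : ℕ) else x, fun x => by simp⟩
  have hfd' : ∀ x (hx : x < 19), f x = φ ⟨x, hx⟩ := fun x hx => hfd ⟨x, hx⟩
  have hP : Pres f := by
    intro x hx' y hy hok
    simp only [ok, Bool.and_eq_true, not_iff, beq_iff] at hok ⊢
    obtain ⟨hne, h7⟩ := hok
    have hne' : (⟨x, hx'⟩ : Fin 19) ≠ ⟨y, hy⟩ := fun h => hne (congrArg Fin.val h)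
    have h77 := map_hx h hne' h7
    rw [hfd' x hx', hfd' y hy]
    refine ⟨⟨fun h => hne' (φ.injective (Fin.ext h)), h77⟩, ?_⟩
    rw [fx_lt (repF s) _ _ h77, ← map_op h]
    have := fx_lt (repF r) ⟨x, hx'⟩ ⟨y, hy⟩ h7
    simp only at this
    rw [this, hfd]
  obtain ⟨k, hk, hpm⟩ := four hP (fun x hx => by rw [hfd' x hx]; exact (φ _).2)
    (fun x hx y hy hxy => by
      rw [hfd' x hx, hfd' y hy] at hxy
      exact congrArg Fin.val (φ.injective (Fin.ext hxy)))
  have g := chkNon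
  rw [allB_iff] at g
  have g1 := g r r.2
  rw [allB_iff] at g1
  have g2 := g1 s s.2
  rw [allB_iff] at g2
  have g3 := g2 k hk
  simp only [Bool.and_eq_true, Bool.or_eq_true, beq_iff, not_iff, allB_iff] at g3
  rcases g3 with ⟨g3, rfl⟩ | g3
  · refine ⟨Fin.ext g3, ?_⟩
    have z := pm_zero
    simp only [allB_iff, beq_iff] at z
    ext x
    rw [← hfd, hpm x x.2, z x x.2]
    rfl
  · exfalso
    apply g3
    intro x hx' y hy
    have h1 := congrArg Fin.val (map_op h ⟨x, hx'⟩ ⟨y, hy⟩)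
    rw [← hfd] at h1
    have h2 : f (op (rep r) x y) = op (rep s) (φ ⟨x, hx'⟩) (φ ⟨y, hy⟩) := h1
    rw [← hfd, ← hfd] at h2
    have h3 : op (rep r) x y < 19 := (sq (rep_lt r.2).1 hx' hy).1
    rw [hpm _ h3, hpm x hx', hpm y hy] at h2
    exact h2

/-! ### The classes and their adjacencies -/

theorem sub_eq {v : ℕ} {S T : STS v} (h : S.blocks ⊆ T.blocks) : S = T := by
  apply sts_ext
  apply Finset.Subset.antisymm h
  intro B hB
  obtain ⟨x, y, hxy, hx, hy⟩ := exists_pair T hB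
  obtain ⟨C, ⟨hC, hxC, hyC⟩, -⟩ := S.covers x y hxy
  rw [block_eq T hB (h hC) hxy hx hy hxC hyC]
  exact hC

theorem pm_lt {k x : ℕ} (hk : k < 4) (hx : x < 19) : pm k x < 19 ∧ pm k (pm k x) = x := by
  have g := chkPm
  rw [allB_iff] at g
  have g1 := g k hk
  rw [allB_iff] at g1
  have g2 := g1 x hx
  simp only [Bool.and_eq_true, beq_iff, ble_iff] at g2
  exact ⟨by omega, g2.2⟩

def pmE (k : Fin 4) : Equiv.Perm (Fin 19) where
  toFun x := ⟨pm k x, (pm_lt k.2 x.2).1⟩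
  invFun x := ⟨pm k x, (pm_lt k.2 x.2).1⟩
  left_inv x := Fin.ext (pm_lt k.2 x.2).2
  right_inv x := Fin.ext (pm_lt k.2 x.2).2

theorem cls_lt {e : ℕ} (he : e < 64) : cls e < 16 ∧ eta e < 4 := by
  have g := chkCls
  rw [allB_iff] at g
  have g1 := g e he
  simp only [Bool.and_eq_true, ble_iff] at g1
  omega

def clsF (e : Fin 64) : Fin 16 := ⟨cls e, (cls_lt e.2).1⟩
def etaF (e : Fin 64) : Fin 4 := ⟨eta e, (cls_lt e.2).2⟩

theorem sys_iso (e : Fin 64) : mapS (pmE (etaF e)) (sys e) = rs (clsF e) := by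
  apply sub_eq
  intro B hB
  obtain ⟨C, hC, rfl⟩ := Finset.mem_image.mp hB
  obtain ⟨x, y, hxy, rfl⟩ := (mem_sys _ _).mp hC
  have g := chkIso
  rw [allB_iff] at g
  have g1 := g e e.2
  rw [allB_iff] at g1
  have g2 := g1 x x.2
  rw [allB_iff] at g2
  have g3 := (beq_iff _ _).mp (g2 y y.2)
  have g4 : pmE (etaF e) (opF e x y) =
      opF (repF (clsF e)) (pmE (etaF e) x) (pmE (etaF e) y) := Fin.ext g3
  refine (mem_sys _ _).mpr ⟨pmE (etaF e) x, pmE (etaF e) y,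
    fun h => hxy ((pmE (etaF e)).injective h), ?_⟩
  simp [blk, Finset.image_insert, g4]

/-- The 16 classes. -/
def cl (r : Fin 16) : Quot (@STS.Iso 19) := Quot.mk _ (rs r)

theorem cl_sys (e : Fin 64) : (Quot.mk _ (sys e) : Quot (@STS.Iso 19)) = cl (clsF e) :=
  (mk_eq _ _).mpr ((iso_iff _ _).mpr ⟨_, (sys_iso e).symm⟩)

theorem cl_inj : Function.Injective cl := by
  intro r s h
  obtain ⟨φ, hφ⟩ := (iso_iff _ _).mp ((mk_eq _ _).mp h)
  exact (iso_rs hφ.symm).1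

theorem aut_triv (r : Fin 16) (φ ψ : Equiv.Perm (Fin 19))
    (h : ∀ B : Finset (Fin 19), B ∈ (mapS φ (rs r)).blocks ↔
      B.image ψ ∈ (mapS φ (rs r)).blocks) : ψ = Equiv.refl _ := by
  have h1 : mapS (φ.trans (ψ.trans φ.symm)) (rs r) = rs r := by
    apply sub_eq
    intro B hB
    obtain ⟨C, hC, rfl⟩ := Finset.mem_image.mp hB
    have h2 : (C.image φ).image ψ ∈ (mapS φ (rs r)).blocks :=
      (h _).mp ((mem_mapS φ _ _).mpr hC)
    have h3 : (C.image φ).image ψ = (C.image (φ.trans (ψ.trans φ.symm))).image φ := by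
      simp only [Finset.image_image]
      congr 1
      funext x
      simp
    rw [h3, mem_mapS] at h2
    exact h2
  have h4 := (iso_rs h1).2
  ext x
  have h5 := congrArg (fun e : Equiv.Perm (Fin 19) => φ (e (φ.symm x))) h4
  simp at h5
  simp [h5]

theorem adj_cl (i : Fin 16) (q : Quot (@STS.Iso 19)) :
    (SwGraph 19 {4}).Adj (cl i) q ↔ ∃ j : Fin 16, adjN i j = true ∧ q = cl j := by
  have g := chkAdj
  rw [allB_iff] at g
  have g1 := g i i.2
  rw [allB_iff] at g1
  have gg : ∀ j : Fin 16, adjN i j = true ↔ i ≠ j ∧ ∃ t : Fin 6, clsF (swF i t) = j := by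
    intro j
    have g2 := g1 j j.2
    simp only [Bool.and_eq_true, Bool.or_eq_true, beq_iff, not_iff, anyB_iff] at g2
    have e1 : ((i : ℕ) = j) ↔ i = j := Fin.ext_iff.symm
    have e2 : (∃ t < 6, cls (Nat.xor (rep i) (Nat.pow 2 t)) = j) ↔
        ∃ t : Fin 6, clsF (swF i t) = j := by
      constructor
      · rintro ⟨t, ht, h⟩
        exact ⟨⟨t, ht⟩, Fin.ext h⟩
      · rintro ⟨t, h⟩
        exact ⟨t, t.2, congrArg Fin.val h⟩
    rw [e1, e2] at g2
    tauto
  unfold cl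
  rw [adj_iff]
  constructor
  · rintro ⟨hne, S', rfl, h⟩
    obtain ⟨t, rfl⟩ := (psw_iff i S').mp h
    refine ⟨clsF (swF i t), (gg _).mpr ⟨?_, t, rfl⟩, cl_sys _⟩
    rintro h
    exact hne ((congrArg cl h).trans (cl_sys _).symm)
  · rintro ⟨j, hj, rfl⟩
    obtain ⟨hij, t, ht⟩ := (gg j).mp hj
    refine ⟨fun h => hij (cl_inj h), sys (swF i t), ?_, (psw_iff _ _).mpr ⟨t, rfl⟩⟩
    rw [cl_sys, ht]
    rfl

end Sw16

namespace Sw16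

/-! ### The graph on 16 vertices -/

theorem chkSym : ∀ i j : Fin 16, adjN i j = adjN j i := by decide +kernel
theorem chkIrr : ∀ i : Fin 16, adjN i i = false := by decide +kernel

/-- The component, as a graph on 16 vertices. -/
def G16 : SimpleGraph (Fin 16) := SimpleGraph.mk' ⟨fun i j => adjN i j, by
  refine ⟨fun x y => ?_, fun x => ?_⟩
  · show adjN x y = adjN y x
    exact chkSym x y
  · show ¬ (adjN x x = true)
    rw [chkIrr x]; simp⟩

theorem G16_adj (i j : Fin 16) : G16.Adj i j ↔ adjN i j = true := Iff.rfl

instance : DecidableRel G16.Adj := fun i j => decidable_of_iff _ (G16_adj i j).symm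

def mask6 : ℕ := 7514
def maskC : ℕ := 43434
/-- Eight automorphisms (4 bits per entry). -/
def tabU : ℕ := 2043287283454257372150516182252714474716913404450737539601675867431654880747873625342594275534600636111356861834096613077896234132556970749245412370297360

/-- Whether the vertex has degree 6. -/
def side (v : ℕ) : ℕ := ent mask6 1 v
def colr (v : ℕ) : ℕ := ent maskC 1 v
def au (k x : ℕ) : ℕ := ent tabU 4 (Nat.add (Nat.mul 16 k) x)

theorem chkDeg : ∀ v : Fin 16, G16.degree v = 5 + side v := by decide +kernel

theorem chkCol : ∀ i j : Fin 16, adjN i j = true → colr i ≠ colr j := by decide +kernel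

theorem G16_col : G16.Colorable 2 := by
  have hlt : ∀ v, colr v < 2 := fun v => Nat.mod_lt _ (by norm_num)
  exact ⟨SimpleGraph.Coloring.mk (fun v => (⟨colr v, hlt v⟩ : Fin 2))
    (fun {i j} h h' => chkCol i j h (congrArg Fin.val h'))⟩

theorem side_iso (φ : G16 ≃g G16) (v : Fin 16) : side (φ v) = side v := by
  have h1 := chkDeg (φ v)
  have h2 := chkDeg v
  have h3 := SimpleGraph.Iso.degree_eq φ v
  omega

/-- The numbers `g 0, …, g (n-1)` are the images of an initial segment under a partial
isomorphism. -/
def Part (g : ℕ → ℕ) (n : ℕ) : Prop :=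
  (∀ i < n, g i < 16) ∧ ∀ j < n, ∀ i < j, g i ≠ g j ∧ adjN (g i) (g j) = adjN i j

theorem mkIso {g : ℕ → ℕ} (h : Part g 16) : ∃ φ : G16 ≃g G16, ∀ i : Fin 16, (φ i : ℕ) = g i := by
  obtain ⟨h1, h2⟩ := h
  let gF : Fin 16 → Fin 16 := fun i => ⟨g i, h1 i i.2⟩
  have hinj : Function.Injective gF := by
    intro i j hij
    have hv : g i = g j := congrArg Fin.val hij
    rcases lt_trichotomy (i : ℕ) j with h | h | h
    · exact absurd hv (h2 j j.2 i h).1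
    · exact Fin.ext h
    · exact absurd hv.symm (h2 i i.2 j h).1
  have hbij : Function.Bijective gF := Finite.injective_iff_bijective.mp hinj
  have hadj : ∀ i j : Fin 16, adjN (gF i) (gF j) = adjN i j := by
    intro i j
    rcases lt_trichotomy (i : ℕ) j with h | h | h
    · exact (h2 j j.2 i h).2
    · rw [Fin.ext h, chkIrr, chkIrr]
    · rw [chkSym (gF i) (gF j), chkSym i j]
      exact (h2 i i.2 j h).2
  refine ⟨⟨Equiv.ofBijective gF hbij, ?_⟩, fun i => rfl⟩
  intro i j
  show adjN (gF i) (gF j) = true ↔ adjN i j = true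
  rw [hadj]

/-- Extension of an automorphism to all natural numbers. -/
def toN (φ : G16 ≃g G16) (x : ℕ) : ℕ := if h : x < 16 then (φ ⟨x, h⟩ : ℕ) else x

theorem toN_fin (φ : G16 ≃g G16) (x : Fin 16) : toN φ x = φ x := by simp [toN]

theorem part_toN (φ : G16 ≃g G16) : Part (toN φ) 16 := by
  constructor
  · intro i hi
    have := toN_fin φ ⟨i, hi⟩
    simp only at this
    rw [this]
    exact (φ _).2
  · intro j hj i hij
    have ej := toN_fin φ ⟨j, hj⟩
    have ei := toN_fin φ ⟨i, hij.trans hj⟩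
    simp only at ej ei
    rw [ej, ei]
    constructor
    · intro h
      have := congrArg Fin.val (φ.injective (Fin.ext h))
      simp only at this
      omega
    · have := φ.map_adj_iff (v := ⟨i, hij.trans hj⟩) (w := ⟨j, hj⟩)
      rw [G16_adj, G16_adj] at this
      exact Bool.eq_iff_iff.mpr this

/-- `l` lists `g (n-1), …, g 0`. -/
def Pre (g : ℕ → ℕ) : List ℕ → Prop
  | [] => True
  | x :: l => g l.length = x ∧ Pre g l

/-- Vertex `t` may be mapped to `w` after the vertices in `l`. -/
def good (t w : ℕ) : List ℕ → Bool
  | [] => true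
  | x :: l => and (not (Nat.beq x w))
      (and (bif adjN x w then adjN l.length t else not (adjN l.length t)) (good t w l))

def sumB (n : ℕ) (f : ℕ → ℕ) : ℕ :=
  Nat.rec (motive := fun _ => ℕ) 0 (fun k ih => Nat.add (f k) ih) n

theorem sumB_eq (n : ℕ) (f : ℕ → ℕ) : sumB n f = ∑ i : Fin n, f i := by
  induction n with
  | zero => rfl
  | succ n ih =>
    have : sumB (n + 1) f = f n + sumB n f := rfl
    rw [this, ih, Fin.sum_univ_castSucc, add_comm]
    simp

/-- Number of ways to extend a partial isomorphism by `k` more vertices. -/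
def cnt : ℕ → List ℕ → ℕ
  | 0, _ => 1
  | k + 1, l => sumB 16 fun w =>
    bif and (Nat.beq (side w) (side l.length)) (good l.length w l) then cnt k (w :: l) else 0

theorem good_iff {g : ℕ → ℕ} {l : List ℕ} (h : Pre g l) (t w : ℕ) :
    good t w l = true ↔ ∀ i < l.length, g i ≠ w ∧ adjN (g i) w = adjN i t := by
  induction l with
  | nil => simp [good]
  | cons x l ih =>
    obtain ⟨rfl, h2⟩ := h
    simp only [good, Bool.and_eq_true, not_iff, beq_iff, ih h2, List.length_cons]
    have hc : (bif adjN (g l.length) w then adjN l.length t else not (adjN l.length t)) = true ↔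
        adjN (g l.length) w = adjN l.length t := by
      cases adjN (g l.length) w <;> cases adjN l.length t <;> simp
    rw [hc]
    constructor
    · rintro ⟨h3, h4, h5⟩ i hi
      rcases Nat.lt_succ_iff_lt_or_eq.mp hi with h | rfl
      · exact h5 i h
      · exact ⟨h3, h4⟩
    · intro h
      exact ⟨(h _ (Nat.lt_succ_self _)).1, (h _ (Nat.lt_succ_self _)).2,
        fun i hi => h i (Nat.lt_succ_of_lt hi)⟩

theorem pre_congr {g g' : ℕ → ℕ} {l : List ℕ} (h : ∀ i < l.length, g i = g' i)
    (hp : Pre g l) : Pre g' l := by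
  induction l with
  | nil => trivial
  | cons x l ih =>
    obtain ⟨h1, h2⟩ := hp
    exact ⟨(h _ (Nat.lt_succ_self _)).symm.trans h1,
      ih (fun i hi => h i (Nat.lt_succ_of_lt hi)) h2⟩

theorem pre_unique {g g' : ℕ → ℕ} {l : List ℕ} (h : Pre g l) (h' : Pre g' l) :
    ∀ i < l.length, g i = g' i := by
  induction l with
  | nil => intro i hi; simp at hi
  | cons x l ih =>
    obtain ⟨h1, h2⟩ := h
    obtain ⟨h3, h4⟩ := h'
    intro i hi
    rcases Nat.lt_succ_iff_lt_or_eq.mp hi with h | rfl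
    · exact ih h2 h4 i h
    · exact h1.trans h3.symm

instance fin_aut : Finite (G16 ≃g G16) :=
  Finite.of_injective (fun φ : G16 ≃g G16 => φ.toEquiv) RelIso.toEquiv_injective

theorem cnt_eq (k : ℕ) : ∀ (l : List ℕ) (g : ℕ → ℕ), l.length + k = 16 → Pre g l →
    Part g l.length → Nat.card {φ : G16 ≃g G16 // Pre (toN φ) l} = cnt k l := by
  induction k with
  | zero =>
    intro l g hl hp hg
    have hl' : l.length = 16 := by omega
    rw [hl'] at hg
    obtain ⟨φ, hφ⟩ := mkIso hg
    show _ = 1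
    rw [Nat.card_eq_one_iff_unique]
    constructor
    · constructor
      rintro ⟨a, ha⟩ ⟨b, hb⟩
      apply Subtype.ext
      apply RelIso.ext
      intro x
      have := pre_unique ha hb x (by rw [hl']; exact x.2)
      rw [toN_fin, toN_fin] at this
      exact Fin.ext this
    · refine ⟨⟨φ, pre_congr (g := g) ?_ hp⟩⟩
      intro i hi
      have hi' : i < 16 := by omega
      have := toN_fin φ ⟨i, hi'⟩
      simp only at this
      rw [this, hφ]
  | succ k ih =>
    intro l g hl hp hg
    have hlt : l.length < 16 := by omega
    let E : {φ : G16 ≃g G16 // Pre (toN φ) l} ≃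
        Σ w : Fin 16, {φ : G16 ≃g G16 // Pre (toN φ) ((w : ℕ) :: l)} :=
      { toFun := fun φ => ⟨φ.1 ⟨l.length, hlt⟩, φ.1, by
          refine ⟨?_, φ.2⟩
          exact toN_fin φ.1 ⟨l.length, hlt⟩⟩
        invFun := fun p => ⟨p.2.1, p.2.2.2⟩
        left_inv := fun φ => rfl
        right_inv := by
          rintro ⟨w, φ, h1, h2⟩
          have hw : φ ⟨l.length, hlt⟩ = w :=
            Fin.ext ((toN_fin φ ⟨l.length, hlt⟩).symm.trans h1)
          subst hw
          rfl }
    rw [Nat.card_congr E, Nat.card_sigma]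
    show _ = sumB 16 _
    rw [sumB_eq]
    refine Finset.sum_congr rfl fun w _ => ?_
    cases hb : and (Nat.beq (side w) (side l.length)) (good l.length w l) with
    | false =>
      simp only [cond_false]
      rw [Nat.card_eq_zero]
      left
      constructor
      rintro ⟨φ, h1, h2⟩
      rw [← Bool.not_eq_true] at hb
      apply hb
      have hw : φ ⟨l.length, hlt⟩ = w :=
        Fin.ext ((toN_fin φ ⟨l.length, hlt⟩).symm.trans h1)
      rw [Bool.and_eq_true, beq_iff, good_iff h2]
      refine ⟨?_, ?_⟩
      · have := side_iso φ ⟨l.length, hlt⟩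
        rwa [hw] at this
      · intro i hi
        have := (part_toN φ).2 l.length hlt i hi
        rwa [h1] at this
    | true =>
      simp only [cond_true]
      rw [Bool.and_eq_true, good_iff hp] at hb
      have hu : ∀ i < l.length, g i = Function.update g l.length (w : ℕ) i := fun i hi => by
        rw [Function.update_of_ne (by omega)]
      have hs : Function.update g l.length (w : ℕ) l.length = w := Function.update_self ..
      refine ih ((w : ℕ) :: l) (Function.update g l.length w) (by simp; omega)
        ⟨hs, pre_congr hu hp⟩ ⟨?_, ?_⟩
      · intro i hi
        rcases Nat.lt_succ_iff_lt_or_eq.mp hi with h | rfl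
        · rw [← hu i h]; exact hg.1 i h
        · rw [hs]; exact w.2
      · intro j hj i hij
        rcases Nat.lt_succ_iff_lt_or_eq.mp hj with h | rfl
        · rw [← hu j h, ← hu i (by omega)]; exact hg.2 j h i hij
        · rw [hs, ← hu i hij]; exact hb.2 i hij

theorem chkCnt : cnt 16 [] = 256 := by decide +kernel

theorem G16_aut : Nat.card (G16 ≃g G16) = 256 := by
  have h := cnt_eq 16 [] id rfl trivial ⟨fun i hi => by simp at hi, fun i hi => by simp at hi⟩
  rw [chkCnt] at h
  rw [← h]
  exact Nat.card_congr (Equiv.subtypeUnivEquiv (fun φ => trivial)).symm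

theorem chkAu : (allB 8 fun k => allB 16 fun j => and (Nat.ble (au k j) 15)
    (allB j fun i => and (not (Nat.beq (au k i) (au k j)))
      (bif adjN (au k i) (au k j) then adjN i j else not (adjN i j)))) = true := by
  decide +kernel

theorem chkTr : (allB 16 fun v => bif Nat.beq (side v) 0 then
    anyB 8 fun k => Nat.beq (au k 0) v else anyB 8 fun k => Nat.beq (au k 1) v) = true := by
  decide +kernel

theorem au_part {k : ℕ} (hk : k < 8) : Part (au k) 16 := by
  have h := chkAu
  rw [allB_iff] at h
  have h1 := h k hk
  rw [allB_iff] at h1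
  constructor
  · intro i hi
    have h2 := h1 i hi
    simp only [Bool.and_eq_true, ble_iff] at h2
    omega
  · intro j hj i hij
    have h2 := h1 j hj
    simp only [Bool.and_eq_true, allB_iff, not_iff, beq_iff] at h2
    obtain ⟨h3, h4⟩ := h2.2 i hij
    refine ⟨h3, ?_⟩
    revert h4
    cases adjN (au k i) (au k j) <;> cases adjN i j <;> simp

theorem G16_base (v : Fin 16) : ∃ φ : G16 ≃g G16, φ (if side v = 0 then 0 else 1) = v := by
  have h := chkTr
  rw [allB_iff] at h
  have h1 := h v v.2
  by_cases hs : side v = 0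
  · rw [hs] at h1
    replace h1 : (anyB 8 fun k => Nat.beq (au k 0) v) = true := h1
    obtain ⟨k, hk, h2⟩ := (anyB_iff _ _).mp h1
    obtain ⟨φ, hφ⟩ := mkIso (au_part hk)
    refine ⟨φ, ?_⟩
    rw [if_pos hs]
    exact Fin.ext ((hφ 0).trans ((beq_iff _ _).mp h2))
  · have hb : Nat.beq (side v) 0 = false := by
      rw [← Bool.not_eq_true, beq_iff]; exact hs
    rw [hb] at h1
    replace h1 : (anyB 8 fun k => Nat.beq (au k 1) v) = true := h1
    obtain ⟨k, hk, h2⟩ := (anyB_iff _ _).mp h1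
    obtain ⟨φ, hφ⟩ := mkIso (au_part hk)
    refine ⟨φ, ?_⟩
    rw [if_neg hs]
    exact Fin.ext ((hφ 1).trans ((beq_iff _ _).mp h2))

theorem side_lt (v : ℕ) : side v < 2 := Nat.mod_lt _ (by norm_num)

theorem G16_orbit (u w : Fin 16) : side w = side u ↔ ∃ φ : G16 ≃g G16, φ u = w := by
  constructor
  · intro h
    obtain ⟨a, ha⟩ := G16_base u
    obtain ⟨b, hb⟩ := G16_base w
    rw [h] at hb
    refine ⟨a.symm.trans b, ?_⟩
    rw [RelIso.trans_apply, ← ha, RelIso.symm_apply_apply]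
    exact hb
  · rintro ⟨φ, rfl⟩
    exact side_iso φ u

theorem chkSide : (Finset.univ.filter fun v : Fin 16 => side v = 0).card = 8 ∧
    (Finset.univ.filter fun v : Fin 16 => side v = 1).card = 8 := by decide +kernel

theorem chkConn : (allB 16 fun j => or (Nat.beq j 0) (anyB j fun i => adjN i j)) = true := by
  decide +kernel

end Sw16

namespace Sw16

/-! ### The component -/

/-- The component. -/
noncomputable def comp : (SwGraph 19 {4}).ConnectedComponent :=
  (SwGraph 19 {4}).connectedComponentMk (cl 0)

theorem comp_reach {p q : Quot (@STS.Iso 19)} (w : (SwGraph 19 {4}).Walk p q) :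
    p ∈ Set.range cl → q ∈ Set.range cl := by
  induction w with
  | nil => exact id
  | cons h _ ih =>
    rintro ⟨i, rfl⟩
    obtain ⟨j, -, rfl⟩ := (adj_cl i _).mp h
    exact ih ⟨j, rfl⟩

theorem reach_cl : ∀ (n : ℕ) (hn : n < 16), (SwGraph 19 {4}).Reachable (cl ⟨n, hn⟩) (cl 0) := by
  intro n
  induction n using Nat.strong_induction_on with
  | _ n ih =>
    intro hn
    have h := chkConn
    rw [allB_iff] at h
    have h1 := h n hn
    rw [Bool.or_eq_true, beq_iff, anyB_iff] at h1
    rcases h1 with rfl | ⟨i, hi, ha⟩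
    · exact SimpleGraph.Reachable.refl _
    · have hi' : i < 16 := hi.trans hn
      have h2 : (SwGraph 19 {4}).Adj (cl ⟨i, hi'⟩) (cl ⟨n, hn⟩) :=
        (adj_cl ⟨i, hi'⟩ _).mpr ⟨⟨n, hn⟩, ha, rfl⟩
      exact h2.symm.reachable.trans (ih i hi hi')

theorem comp_supp : comp.supp = Set.range cl := by
  ext q
  rw [SimpleGraph.ConnectedComponent.mem_supp_iff]
  unfold comp
  rw [SimpleGraph.ConnectedComponent.eq]
  constructor
  · rintro ⟨w⟩
    exact comp_reach w.reverse ⟨0, rfl⟩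
  · rintro ⟨i, rfl⟩
    exact reach_cl i i.2

/-- The component is isomorphic to the explicit graph. -/
noncomputable def compIso : G16 ≃g (SwGraph 19 {4}).induce comp.supp where
  toEquiv := (Equiv.ofInjective cl cl_inj).trans (Equiv.setCongr comp_supp.symm)
  map_rel_iff' := by
    intro i j
    show (SwGraph 19 {4}).Adj (cl i) (cl j) ↔ G16.Adj i j
    rw [adj_cl, G16_adj]
    constructor
    · rintro ⟨k, hk, h⟩
      rw [cl_inj h]; exact hk
    · intro h
      exact ⟨j, h, rfl⟩

/-- Conjugation by a graph isomorphism. -/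
def conj {V W : Type*} {G : SimpleGraph V} {H : SimpleGraph W} (f : G ≃g H) :
    (G ≃g G) ≃ (H ≃g H) where
  toFun a := (f.symm.trans a).trans f
  invFun b := (f.trans b).trans f.symm
  left_inv a := by ext x; simp
  right_inv b := by ext x; simp

theorem comp_orbit (u w : comp.supp) : side (compIso.symm w) = side (compIso.symm u) ↔
    ∃ φ : (SwGraph 19 {4}).induce comp.supp ≃g (SwGraph 19 {4}).induce comp.supp, φ u = w := by
  rw [G16_orbit]
  constructor
  · rintro ⟨a, ha⟩
    refine ⟨conj compIso a, ?_⟩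
    show compIso (a (compIso.symm u)) = w
    rw [ha, RelIso.apply_symm_apply]
  · rintro ⟨b, rfl⟩
    refine ⟨(conj compIso).symm b, ?_⟩
    show compIso.symm (b (compIso (compIso.symm u))) = _
    rw [RelIso.apply_symm_apply]

theorem comp_card (s : ℕ) (h : (Finset.univ.filter fun v : Fin 16 => side v = s).card = 8) :
    Set.ncard {u : comp.supp | side (compIso.symm u) = s} = 8 := by
  have e : {u : comp.supp | side (compIso.symm u) = s} =
      compIso '' (↑(Finset.univ.filter fun v : Fin 16 => side v = s) : Set (Fin 16)) := by
    ext u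
    constructor
    · intro hu
      exact ⟨compIso.symm u, by simpa using hu, compIso.apply_symm_apply u⟩
    · rintro ⟨v, hv, rfl⟩
      simpa using hv
  rw [e, Set.ncard_image_of_injective _ compIso.injective, Set.ncard_coe_finset, h]

end Sw16


/-- There is a connected component of the Pasch switching graph
`Sw_4(19)` consisting of exactly 16 isomorphism classes, each containing exactly six
Pasch configurations which are pairwise block-disjoint, collectively covering 24
blocks and 18 points, with every one of the 16 systems having trivial automorphism
group; the component is bipartite and its automorphism group (as an undirected graph)
has order 256, acting on the 16 vertices with two orbits of size 8. -/
theorem sw4_component_16 :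
    ∃ c : (SwGraph 19 {4}).ConnectedComponent,
      Nat.card c.supp = 16 ∧
      (∀ q ∈ c.supp, ∀ S : STS 19, Quot.mk _ S = q →
        Nat.card {P : Finset (Finset (Fin 19)) // IsPaschConfig S P} = 6 ∧
        (∀ P Q : Finset (Finset (Fin 19)), IsPaschConfig S P → IsPaschConfig S Q →
          P ≠ Q → Disjoint P Q) ∧
        Set.ncard {B : Finset (Fin 19) | ∃ P, IsPaschConfig S P ∧ B ∈ P} = 24 ∧
        Set.ncard {z : Fin 19 | ∃ P, IsPaschConfig S P ∧ ∃ B ∈ P, z ∈ B} = 18 ∧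
        (∀ φ : Equiv.Perm (Fin 19),
          (∀ B : Finset (Fin 19), B ∈ S.blocks ↔ B.image φ ∈ S.blocks) →
          φ = Equiv.refl (Fin 19))) ∧
      ((SwGraph 19 {4}).induce c.supp).Colorable 2 ∧
      Nat.card (((SwGraph 19 {4}).induce c.supp) ≃g ((SwGraph 19 {4}).induce c.supp))
        = 256 ∧
      (∃ O₁ O₂ : Set c.supp, O₁ ∩ O₂ = ∅ ∧ O₁ ∪ O₂ = Set.univ ∧
        O₁.ncard = 8 ∧ O₂.ncard = 8 ∧
        (∀ u ∈ O₁, ∀ w : c.supp, w ∈ O₁ ↔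
          ∃ φ : ((SwGraph 19 {4}).induce c.supp) ≃g ((SwGraph 19 {4}).induce c.supp),
            φ u = w) ∧
        (∀ u ∈ O₂, ∀ w : c.supp, w ∈ O₂ ↔
          ∃ φ : ((SwGraph 19 {4}).induce c.supp) ≃g ((SwGraph 19 {4}).induce c.supp),
            φ u = w)) := by
  refine ⟨Sw16.comp, ?_, ?_, ?_, ?_, ?_⟩
  · rw [← Nat.card_congr Sw16.compIso.toEquiv, Nat.card_eq_fintype_card, Fintype.card_fin]
  · intro q hq S hS
    rw [Sw16.comp_supp] at hq
    obtain ⟨r, rfl⟩ := hq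
    have hi : (Sw16.rs r).Iso S := (Sw16.mk_eq _ _).mp hS.symm
    obtain ⟨φ, rfl⟩ := (Sw16.iso_iff _ _).mp hi
    exact ⟨Sw16.six_pasch r φ, fun P Q hP hQ h => Sw16.disj_pasch r φ P Q hP hQ h,
      Sw16.blocks_pasch r φ, Sw16.points_pasch r φ, fun ψ h => Sw16.aut_triv r φ ψ h⟩
  · obtain ⟨C⟩ := Sw16.G16_col
    exact ⟨C.comp Sw16.compIso.symm.toHom⟩
  · rw [← Nat.card_congr (Sw16.conj Sw16.compIso)]
    exact Sw16.G16_aut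
  · refine ⟨{u | Sw16.side (Sw16.compIso.symm u) = 0}, {u | Sw16.side (Sw16.compIso.symm u) = 1},
      ?_, ?_, Sw16.comp_card 0 Sw16.chkSide.1, Sw16.comp_card 1 Sw16.chkSide.2, ?_, ?_⟩
    · ext u
      simp only [Set.mem_inter_iff, Set.mem_setOf_eq, Set.mem_empty_iff_false, iff_false]
      omega
    · ext u
      have := Sw16.side_lt (Sw16.compIso.symm u)
      simp only [Set.mem_union, Set.mem_setOf_eq, Set.mem_univ, iff_true]
      omega
    · intro u hu w
      rw [← Sw16.comp_orbit, Set.mem_setOf_eq, show _ = 0 from hu]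
    · intro u hu w
      rw [← Sw16.comp_orbit, Set.mem_setOf_eq, show _ = 1 from hu]
end

section
/- On the 19-element point set {X, Y, Z} ∪ {A_i, B_i : i ∈ Z_8}, the block {X,Y,Z} together with the orbits of the starter blocks {X,A_0,A_1}, {Y,B_0,B_1}, {Z,A_0,A_4}, {Z,B_0,B_4}, {A_0,A_2,B_3}, {A_0,A_3,B_0}, {B_0,B_2,A_4}, {B_0,B_3,A_1} under the permutation (Z)(X Y)(A_0 A_1 … A_7)(B_0 B_1 … B_7) form a Steiner triple system of order 19 with the following properties: the cycle graph C_{XY} consists of exactly two 8-cycles forming a complementary pair, these are the only 8-cycles in the system, and switching either of them yields a system isomorphic to the original; the cycle graphs C_{XZ} and C_{YZ} each consist of four 4-cycles; for each i ∈ Z_8 the cycle graph on {A_i, B_i} consists of a 6-cycle and a 10-cycle, and the cycle graphs on {A_i, A_{i+3}} and {B_i, B_{i+3}} each consist of a 4-cycle and a 12-cycle; on all other pairs of points the cycle graph is a single Hamiltonian 16-cycle. -/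
/-- The point `A_i` (indices mod 8), encoded in `Fin 19`. -/
def qA (i : ℕ) : Fin 19 := ⟨i % 8, by omega⟩

/-- The point `B_i` (indices mod 8). -/
def qB (i : ℕ) : Fin 19 := ⟨8 + i % 8, by omega⟩

/-- The point `X`. -/
def qX : Fin 19 := ⟨16, by omega⟩

/-- The point `Y`. -/
def qY : Fin 19 := ⟨17, by omega⟩

/-- The point `Z`. -/
def qZ : Fin 19 := ⟨18, by omega⟩

/-- The image of `X` under the `m`-th power of the permutation `(Z)(X Y)(A…)(B…)`. -/
def qXY (m : ℕ) : Fin 19 := if m % 2 = 0 then qX else qY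

/-- The image of `Y` under the `m`-th power of the permutation `(Z)(X Y)(A…)(B…)`. -/
def qYX (m : ℕ) : Fin 19 := if m % 2 = 0 then qY else qX

/-- The block `{X,Y,Z}` together with the orbits of the starter blocks `{X,A₀,A₁}`,
`{Y,B₀,B₁}`, `{Z,A₀,A₄}`, `{Z,B₀,B₄}`, `{A₀,A₂,B₃}`, `{A₀,A₃,B₀}`, `{B₀,B₂,A₄}`,
`{B₀,B₃,A₁}` under the permutation `(Z)(X Y)(A₀ A₁ … A₇)(B₀ B₁ … B₇)`. -/
def rot8Blocks : Finset (Finset (Fin 19)) :=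
  insert ({qX, qY, qZ} : Finset (Fin 19)) <|
    (Finset.range 8).biUnion fun m =>
      {({qXY m, qA m, qA (m + 1)} : Finset (Fin 19)),
       {qYX m, qB m, qB (m + 1)},
       {qZ, qA m, qA (m + 4)},
       {qZ, qB m, qB (m + 4)},
       {qA m, qA (m + 2), qB (m + 3)},
       {qA m, qA (m + 3), qB m},
       {qB m, qB (m + 2), qA (m + 4)},
       {qB m, qB (m + 3), qA (m + 1)}}


/-- Table of third points: digit `19 x + y` in base 32 is the third point on the block
through `x` and `y`. -/
def thirdTable : ℕ :=
  1323005288743032985624555237975028738733454064554751659387590903575727425539502535669733208807632071271664309626836666317543690524428741380318758014720064146491355401262265044307516380935171909010081276042710980569152055406661303067850573912862557768955699885052048941877338169698910796958141282189544308619908591588613388784444666831047760564356923857890585426911279000837662691406202869768358603866351756291923317501113740944038976050443399139860452949738155381699587979556036140852326663367763518208036508262692421765274480701109583403560448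

/-- The third point of the block through `x` and `y`. -/
def third (x y : Fin 19) : Fin 19 :=
  ⟨(thirdTable / 32 ^ (19 * x.val + y.val)) % 32 % 19, Nat.mod_lt _ (by decide)⟩

theorem rot8_mem_iff (B : Finset (Fin 19)) : B ∈ rot8Blocks ↔ B = {qX, qY, qZ} ∨
    ∃ m : Fin 8, B = {qXY m, qA m, qA (m + 1)} ∨ B = {qYX m, qB m, qB (m + 1)} ∨
      B = {qZ, qA m, qA (m + 4)} ∨ B = {qZ, qB m, qB (m + 4)} ∨
      B = {qA m, qA (m + 2), qB (m + 3)} ∨ B = {qA m, qA (m + 3), qB m} ∨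
      B = {qB m, qB (m + 2), qA (m + 4)} ∨ B = {qB m, qB (m + 3), qA (m + 1)} := by
  simp only [rot8Blocks, Finset.mem_insert, Finset.mem_biUnion, Finset.mem_range,
    Finset.mem_singleton]
  refine or_congr Iff.rfl ⟨fun ⟨m, hm, h⟩ => ⟨⟨m, hm⟩, h⟩, fun ⟨m, h⟩ => ⟨m, m.2, h⟩⟩

/-- The property of a triple of points that it is a block described by `third`. -/
def TripleOK (x y z : Fin 19) : Prop :=
  x ≠ y ∧ x ≠ z ∧ y ≠ z ∧ third x y = z ∧ third y x = z ∧ third x z = y ∧ third z x = y ∧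
    third y z = x ∧ third z y = x

instance (x y z : Fin 19) : Decidable (TripleOK x y z) := by unfold TripleOK; infer_instance

theorem triples_ok : TripleOK qX qY qZ ∧ ∀ m : Fin 8,
    TripleOK (qXY m) (qA m) (qA (m + 1)) ∧ TripleOK (qYX m) (qB m) (qB (m + 1)) ∧
    TripleOK qZ (qA m) (qA (m + 4)) ∧ TripleOK qZ (qB m) (qB (m + 4)) ∧
    TripleOK (qA m) (qA (m + 2)) (qB (m + 3)) ∧ TripleOK (qA m) (qA (m + 3)) (qB m) ∧
    TripleOK (qB m) (qB (m + 2)) (qA (m + 4)) ∧ TripleOK (qB m) (qB (m + 3)) (qA (m + 1)) := by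
  decide +kernel

theorem rot8_triple (B : Finset (Fin 19)) (hB : B ∈ rot8Blocks) :
    ∃ x y z, B = {x, y, z} ∧ TripleOK x y z := by
  obtain ⟨h0, h⟩ := triples_ok
  rcases (rot8_mem_iff B).1 hB with rfl | ⟨m, h'⟩
  · exact ⟨_, _, _, rfl, h0⟩
  · obtain ⟨h1, h2, h3, h4, h5, h6, h7, h8⟩ := h m
    rcases h' with rfl | rfl | rfl | rfl | rfl | rfl | rfl | rfl
    exacts [⟨_, _, _, rfl, h1⟩, ⟨_, _, _, rfl, h2⟩, ⟨_, _, _, rfl, h3⟩, ⟨_, _, _, rfl, h4⟩,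
      ⟨_, _, _, rfl, h5⟩, ⟨_, _, _, rfl, h6⟩, ⟨_, _, _, rfl, h7⟩, ⟨_, _, _, rfl, h8⟩]

theorem rot8_card (B : Finset (Fin 19)) (hB : B ∈ rot8Blocks) : B.card = 3 := by
  obtain ⟨x, y, z, rfl, h1, h2, h3, -⟩ := rot8_triple B hB
  exact Finset.card_eq_three.2 ⟨x, y, z, h1, h2, h3, rfl⟩

theorem rot8_eq (B : Finset (Fin 19)) (hB : B ∈ rot8Blocks) (x : Fin 19) (hx : x ∈ B)
    (y : Fin 19) (hy : y ∈ B) (hxy : x ≠ y) : B = {x, y, third x y} := by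
  obtain ⟨p, q, r, rfl, h1, h2, h3, e1, e2, e3, e4, e5, e6⟩ := rot8_triple B hB
  simp only [Finset.mem_insert, Finset.mem_singleton] at hx hy
  rcases hx with rfl | rfl | rfl <;> rcases hy with rfl | rfl | rfl <;>
    first
    | exact absurd rfl hxy
    | simp only [e1]
    | (simp only [e2, e3, e4, e5, e6]; ext w
       simp only [Finset.mem_insert, Finset.mem_singleton]; tauto)

/-- Membership of an ordered triple in the block orbits, up to reordering. -/
def SameTriple (x y z p q r : Fin 19) : Prop :=
  (x = p ∨ x = q ∨ x = r) ∧ (y = p ∨ y = q ∨ y = r) ∧ (z = p ∨ z = q ∨ z = r)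

instance (x y z p q r : Fin 19) : Decidable (SameTriple x y z p q r) := by
  unfold SameTriple; infer_instance

theorem third_ne : ∀ x y : Fin 19, x ≠ y → third x y ≠ x ∧ third x y ≠ y := by decide +kernel

theorem same_eq {x y p q r : Fin 19} (hxy : x ≠ y)
    (h : SameTriple x y (third x y) p q r) :
    ({x, y, third x y} : Finset (Fin 19)) = {p, q, r} := by
  obtain ⟨h1, h2⟩ := third_ne x y hxy
  refine Finset.eq_of_subset_of_card_le ?_ ?_
  · intro w hw
    simp only [Finset.mem_insert, Finset.mem_singleton] at hw ⊢
    obtain ⟨a1, a2, a3⟩ := h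
    rcases hw with rfl | rfl | rfl <;> assumption
  · rw [Finset.card_eq_three.2 ⟨x, y, third x y, hxy, h1.symm, h2.symm, rfl⟩]
    exact Finset.card_le_three

theorem same_exists : ∀ x y : Fin 19, x ≠ y → SameTriple x y (third x y) qX qY qZ ∨
    ∃ m : Fin 8, SameTriple x y (third x y) (qXY m) (qA m) (qA (m + 1)) ∨
      SameTriple x y (third x y) (qYX m) (qB m) (qB (m + 1)) ∨
      SameTriple x y (third x y) qZ (qA m) (qA (m + 4)) ∨
      SameTriple x y (third x y) qZ (qB m) (qB (m + 4)) ∨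
      SameTriple x y (third x y) (qA m) (qA (m + 2)) (qB (m + 3)) ∨
      SameTriple x y (third x y) (qA m) (qA (m + 3)) (qB m) ∨
      SameTriple x y (third x y) (qB m) (qB (m + 2)) (qA (m + 4)) ∨
      SameTriple x y (third x y) (qB m) (qB (m + 3)) (qA (m + 1)) := by
  decide +kernel

theorem rot8_mem (x y : Fin 19) (h : x ≠ y) :
    ({x, y, third x y} : Finset (Fin 19)) ∈ rot8Blocks := by
  rw [rot8_mem_iff]
  refine (same_exists x y h).imp (same_eq h) ?_
  rintro ⟨m, hm⟩
  refine ⟨m, ?_⟩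
  exact hm.imp (same_eq h) (Or.imp (same_eq h) (Or.imp (same_eq h) (Or.imp (same_eq h)
    (Or.imp (same_eq h) (Or.imp (same_eq h) (Or.imp (same_eq h) (same_eq h)))))))

theorem third_third : ∀ x y : Fin 19, x ≠ y → third x (third x y) = y := by decide +kernel

/-- The system. -/
def rotSys : STS 19 where
  blocks := rot8Blocks
  card_blocks := rot8_card
  covers := fun x y h => ⟨{x, y, third x y}, ⟨rot8_mem x y h, by simp, by simp⟩,
    fun B hB => rot8_eq B hB.1 x hB.2.1 y hB.2.2 h⟩

theorem rotSys_blocks : rotSys.blocks = rot8Blocks := rfl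

theorem triple_ne {a x y : Fin 19} (h : ({a, x, y} : Finset (Fin 19)).card = 3) :
    a ≠ x ∧ a ≠ y ∧ x ≠ y := by
  have h2 : ∀ p q : Fin 19, ({p, q} : Finset (Fin 19)).card ≤ 2 := fun p q => Finset.card_le_two
  refine ⟨?_, ?_, ?_⟩ <;> rintro rfl
  · have := h2 a y
    simp only [Finset.insert_idem] at h
    omega
  · have := h2 x a
    rw [Finset.insert_comm] at h
    simp only [Finset.pair_eq_singleton] at h
    omega
  · have := h2 a x
    simp only [Finset.pair_eq_singleton] at h
    omega

theorem triple_mem {a x y : Fin 19} :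
    ({a, x, y} : Finset (Fin 19)) ∈ rot8Blocks ↔ a ≠ x ∧ y = third a x := by
  constructor
  · intro h
    obtain ⟨h1, h2, h3⟩ := triple_ne (rot8_card _ h)
    refine ⟨h1, ?_⟩
    have := rot8_eq _ h a (by simp) x (by simp) h1
    have hy : y ∈ ({a, x, third a x} : Finset (Fin 19)) := by rw [← this]; simp
    simp only [Finset.mem_insert, Finset.mem_singleton] at hy
    rcases hy with hy | hy | hy
    · exact absurd hy.symm h2
    · exact absurd hy.symm h3
    · exact hy
  · rintro ⟨h, rfl⟩
    exact rot8_mem a x h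

/-- `z` lies outside the block through `a` and `b`. -/
def Outside (a b z : Fin 19) : Prop := z ≠ a ∧ z ≠ b ∧ z ≠ third a b

instance (a b z : Fin 19) : Decidable (Outside a b z) := by unfold Outside; infer_instance

theorem outside_iff {a b : Fin 19} (hab : a ≠ b) (z : Fin 19) :
    (∀ B ∈ rotSys.blocks, a ∈ B → b ∈ B → z ∉ B) ↔ Outside a b z := by
  constructor
  · intro h
    have := h _ (rot8_mem a b hab) (by simp) (by simp)
    simpa [Outside] using this
  · intro h B hB ha hb
    rw [rot8_eq B hB a ha b hb hab]
    simpa [Outside] using h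

/-- The adjacency relation of the cycle graph in terms of third points. -/
def Step (a b x y : Fin 19) : Prop :=
  Outside a b x ∧ Outside a b y ∧ (y = third a x ∨ y = third b x)

instance (a b x y : Fin 19) : Decidable (Step a b x y) := by unfold Step; infer_instance

theorem adj_iff {a b : Fin 19} (hab : a ≠ b) (x y : Fin 19) :
    (rotSys.cycleGraph a b).Adj x y ↔ Step a b x y := by
  have key : ∀ x y : Fin 19, ((∀ B ∈ rotSys.blocks, a ∈ B → b ∈ B → x ∉ B ∧ y ∉ B) ∧
      ((({a, x, y} : Finset (Fin 19)) ∈ rotSys.blocks) ∨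
        (({b, x, y} : Finset (Fin 19)) ∈ rotSys.blocks))) ↔ Step a b x y := by
    intro x y
    have h1 : (∀ B ∈ rotSys.blocks, a ∈ B → b ∈ B → x ∉ B ∧ y ∉ B) ↔
        Outside a b x ∧ Outside a b y := by
      rw [← outside_iff hab, ← outside_iff hab]
      exact ⟨fun h => ⟨fun B h1 h2 h3 => (h B h1 h2 h3).1, fun B h1 h2 h3 => (h B h1 h2 h3).2⟩,
        fun h B h1 h2 h3 => ⟨h.1 B h1 h2 h3, h.2 B h1 h2 h3⟩⟩
    rw [h1, rotSys_blocks, triple_mem, triple_mem, Step]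
    constructor
    · rintro ⟨⟨h, h'⟩, h2 | h2⟩
      · exact ⟨h, h', Or.inl h2.2⟩
      · exact ⟨h, h', Or.inr h2.2⟩
    · rintro ⟨h, h', h2 | h2⟩
      · exact ⟨⟨h, h'⟩, Or.inl ⟨h.1.symm, h2⟩⟩
      · exact ⟨⟨h, h'⟩, Or.inr ⟨h.2.1.symm, h2⟩⟩
  unfold STS.cycleGraph
  rw [SimpleGraph.fromRel_adj, key, key]
  constructor
  · rintro ⟨_, h | ⟨h1, h2, h3⟩⟩
    · exact h
    · refine ⟨h2, h1, ?_⟩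
      rcases h3 with rfl | rfl
      · exact Or.inl (third_third a y h1.1.symm).symm
      · exact Or.inr (third_third b y h1.2.1.symm).symm
  · intro h
    refine ⟨?_, Or.inl h⟩
    obtain ⟨h1, h2, h3⟩ := h
    rcases h3 with rfl | rfl
    · exact (third_ne a x h1.1.symm).2.symm
    · exact (third_ne b x h1.2.1.symm).2.symm

/-- The list `l` is a cycle of the cycle graph. -/
def GoodList (a b : Fin 19) (l : List (Fin 19)) : Prop :=
  3 ≤ l.length ∧ l.Nodup ∧ l.IsChain (Step a b) ∧
    ∀ h : l ≠ [], Step a b (l.getLast h) (l.head h)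

instance (a b : Fin 19) (l : List (Fin 19)) : Decidable (GoodList a b l) := by
  unfold GoodList; infer_instance

theorem cycleOn_of_good {a b : Fin 19} (hab : a ≠ b) {l : List (Fin 19)} (h : GoodList a b l) :
    CycleOn rotSys a b l.toFinset.card l.toFinset := by
  obtain ⟨h3, hnd, hch, hcl⟩ := h
  have hne : l ≠ [] := by rintro rfl; simp at h3
  have hch' : l.IsChain (rotSys.cycleGraph a b).Adj :=
    hch.imp fun x y hxy => (adj_iff hab x y).2 hxy
  have hcl' := (adj_iff hab _ _).2 (hcl hne)
  have hsup := SimpleGraph.Walk.support_ofSupport hne hch'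
  generalize SimpleGraph.Walk.ofSupport l hne hch' = w at hsup
  have hcard : l.toFinset.card = l.length := List.toFinset_card_of_nodup hnd
  have hlen : w.length + 1 = l.length := by
    rw [← SimpleGraph.Walk.length_support, hsup]
  have hpath : w.IsPath := by
    rw [SimpleGraph.Walk.isPath_def, hsup]; exact hnd
  refine ⟨rfl, l.getLast hne, by simp, SimpleGraph.Walk.cons hcl' w, ?_, ?_, ?_⟩
  · rw [SimpleGraph.Walk.cons_isCycle_iff]
    refine ⟨hpath, fun hm => ?_⟩
    rw [Sym2.eq_swap] at hm
    have := hpath.length_eq_one_of_mem_edges hm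
    omega
  · simp [hcard, hlen]
  · intro u
    rw [SimpleGraph.Walk.support_cons, hsup]
    simp only [List.mem_cons, List.mem_toFinset]
    constructor
    · rintro (rfl | h)
      · simp
      · exact h
    · exact Or.inr

/-- Apply `f` to `x`, evaluating `x` first. -/
def forceFin {α : Type} (x : Fin 19) (f : Fin 19 → α) : α :=
  Nat.rec (motive := fun _ => α) (f (Fin.ofNat 19 0)) (fun k _ => f (Fin.ofNat 19 (k + 1))) x.val

/-- The vertices of the cycle through `z`, starting from `cur`. -/
def orbList (a b z : Fin 19) : ℕ → Fin 19 → List (Fin 19)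
  | 0, _ => []
  | n + 1, cur => forceFin (third a cur) fun u => forceFin (third b u) fun v =>
      cur :: u :: (if v = z then [] else orbList a b z n v)

/-- Greedy decomposition of a list of vertices into cycles. -/
def decomp (a b : Fin 19) : ℕ → List (Fin 19) → List (List (Fin 19))
  | 0, _ => []
  | _ + 1, [] => []
  | n + 1, z :: r =>
      orbList a b z 9 z :: decomp a b n (r.filter fun u => u ∉ orbList a b z 9 z)

/-- Put a two-element list of lists in order of length. -/
def order2 : List (List (Fin 19)) → List (List (Fin 19))
  | [l, m] => if m.length < l.length then [m, l] else [l, m]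
  | o => o

/-- The cycle decomposition of `C_ab`. -/
def dec (a b : Fin 19) : List (List (Fin 19)) :=
  order2 (decomp a b 4 ((List.finRange 19).filter fun z => decide (Outside a b z)))

/-- The cycle lengths of `C_ab`. -/
def lens (a b : Fin 19) : List ℕ := (dec a b).map List.length

theorem dec_good : ∀ a b : Fin 19, a ≠ b → ∀ l ∈ dec a b, GoodList a b l := by
  decide +kernel

/-- The two lists have no common element. -/
def DisjList (l m : List (Fin 19)) : Prop := ∀ x ∈ l, x ∉ m

instance : DecidableRel DisjList := fun l m => by unfold DisjList; infer_instance

theorem dec_disj : ∀ a b : Fin 19, a ≠ b →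
    (dec a b).Pairwise DisjList := by
  decide +kernel

theorem dec_cover : ∀ a b : Fin 19, a ≠ b → ∀ z, Outside a b z → ∃ l ∈ dec a b, z ∈ l := by
  decide +kernel

theorem good_outside {a b : Fin 19} {l : List (Fin 19)} (h : GoodList a b l) :
    ∀ z ∈ l, Outside a b z := by
  obtain ⟨h3, -, hch, hcl⟩ := h
  have hne : l ≠ [] := by rintro rfl; simp at h3
  have hl := hcl hne
  clear hcl h3
  have : ∀ l : List (Fin 19), (∀ h : l ≠ [], Outside a b (l.getLast h)) → l.IsChain (Step a b) →
      ∀ z ∈ l, Outside a b z := by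
    intro l
    induction l with
    | nil => simp
    | cons x r ih =>
      intro h1 h2 z hz
      cases r with
      | nil =>
        have := h1 (by simp)
        simp at hz this
        exact hz ▸ this
      | cons y s =>
        rw [List.isChain_cons_cons] at h2
        rcases List.mem_cons.1 hz with rfl | hz
        · exact h2.1.1
        · exact ih (fun _ => by simpa using h1 (by simp)) h2.2 z hz
  exact this l (fun _ => hl.1) hch

theorem cycleStructure_lens {a b : Fin 19} (hab : a ≠ b) :
    CycleStructure rotSys a b (lens a b) := by
  refine ⟨(dec a b).map List.toFinset, ?_, ?_, ?_, ?_⟩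
  · rw [lens, List.map_map]
    refine List.map_congr_left fun l hl => ?_
    exact List.toFinset_card_of_nodup (dec_good a b hab l hl).2.1
  · rw [List.pairwise_map]
    refine (dec_disj a b hab).imp fun {l m} h => ?_
    rw [Finset.disjoint_left]
    intro x hx
    simpa using h x (by simpa using hx)
  · intro W hW
    obtain ⟨l, hl, rfl⟩ := List.mem_map.1 hW
    exact cycleOn_of_good hab (dec_good a b hab l hl)
  · intro z
    rw [outside_iff hab]
    constructor
    · intro h
      obtain ⟨l, hl, hz⟩ := dec_cover a b hab z h
      exact ⟨l.toFinset, List.mem_map_of_mem hl, by simpa using hz⟩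
    · rintro ⟨W, hW, hz⟩
      obtain ⟨l, hl, rfl⟩ := List.mem_map.1 hW
      exact good_outside (dec_good a b hab l hl) z (by simpa using hz)

theorem cycleOn_closed {a b : Fin 19} (hab : a ≠ b) {n : ℕ} {W : Finset (Fin 19)}
    (h : CycleOn rotSys a b n W) {u v : Fin 19} (hu : u ∈ W)
    (huv : (rotSys.cycleGraph a b).Adj u v) : v ∈ W := by
  obtain ⟨-, z, -, w, hc, -, hs⟩ := h
  have h2 := hc.ncard_neighborSet_toSubgraph_eq_two ((hs u).2 hu)
  have hsub : w.toSubgraph.neighborSet u ⊆ {third a u, third b u} := by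
    intro y hy
    have := (adj_iff hab u y).1 (w.toSubgraph.adj_sub hy)
    exact this.2.2
  have heq : w.toSubgraph.neighborSet u = {third a u, third b u} := by
    refine Set.eq_of_subset_of_ncard_le hsub ?_ (Set.toFinite _)
    rw [h2]
    exact (Set.ncard_insert_le _ _).trans (by simp)
  have hv : v ∈ w.toSubgraph.neighborSet u := by
    rw [heq]
    exact ((adj_iff hab u v).1 huv).2.2
  rw [← hs, ← SimpleGraph.Walk.mem_verts_toSubgraph]
  exact w.toSubgraph.edge_vert (w.toSubgraph.adj_symm hv)

theorem walk_mem {V : Type*} {G : SimpleGraph V} {W : Finset V}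
    (hW : ∀ u v, u ∈ W → G.Adj u v → v ∈ W) {u v : V} (p : G.Walk u v) : u ∈ W → v ∈ W := by
  induction p with
  | nil => exact id
  | cons h p ih => exact fun hu => ih (hW _ _ hu h)

theorem cycleOn_sub {a b : Fin 19} (hab : a ≠ b) {n m : ℕ} {W W' : Finset (Fin 19)}
    (h : CycleOn rotSys a b n W) (h' : CycleOn rotSys a b m W') {z : Fin 19}
    (hz : z ∈ W) (hz' : z ∈ W') : W ⊆ W' := by
  intro u hu
  have hcl := fun u v hu huv => cycleOn_closed hab h' (u := u) (v := v) hu huv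
  obtain ⟨-, y, -, w, hc, -, hs⟩ := h
  have p1 := w.takeUntil z ((hs z).2 hz)
  have p2 := w.takeUntil u ((hs u).2 hu)
  exact walk_mem hcl (p1.reverse.append p2) hz'

theorem cycleOn_mem_lens {a b : Fin 19} (hab : a ≠ b) {n : ℕ} {W : Finset (Fin 19)}
    (h : CycleOn rotSys a b n W) : n ∈ lens a b := by
  obtain ⟨Ws, hL, -, hc, hcov⟩ := cycleStructure_lens hab
  have h0 := h
  obtain ⟨hcard, z, hz, w, hcyc, hlen, hs⟩ := h0
  have hadj := w.adj_snd hcyc.not_nil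
  have hout := ((adj_iff hab _ _).1 hadj).1
  obtain ⟨W', hW', hz'⟩ := (hcov z).1 ((outside_iff hab z).2 hout)
  have h' := hc W' hW'
  have : W = W' := Finset.Subset.antisymm (cycleOn_sub hab h h' hz hz') (cycleOn_sub hab h' h hz' hz)
  rw [← hL, ← hcard, this]
  exact List.mem_map_of_mem hW'

theorem eight_lens : ∀ a b : Fin 19, a ≠ b → 8 ∈ lens a b →
    ({a, b} : Finset (Fin 19)) = {qX, qY} := by
  decide +kernel

theorem lens_other : ∀ a b : Fin 19, a ≠ b → lens a b = [16] ∨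
    ({a, b} : Finset (Fin 19)) = {qX, qY} ∨
    ({a, b} : Finset (Fin 19)) = {qX, qZ} ∨
    ({a, b} : Finset (Fin 19)) = {qY, qZ} ∨
    ∃ i : Fin 8, ({a, b} : Finset (Fin 19)) = {qA i, qB i} ∨
      ({a, b} : Finset (Fin 19)) = {qA i, qA (i + 3)} ∨
      ({a, b} : Finset (Fin 19)) = {qB i, qB (i + 3)} := by
  decide +kernel

theorem lens_orbit : ∀ i : Fin 8, (qA i ≠ qB i ∧ lens (qA i) (qB i) = [6, 10]) ∧
    (qA i ≠ qA (i + 3) ∧ lens (qA i) (qA (i + 3)) = [4, 12]) ∧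
    (qB i ≠ qB (i + 3) ∧ lens (qB i) (qB (i + 3)) = [4, 12]) := by
  decide +kernel

theorem cycleStructure_of {a b : Fin 19} {L : List ℕ} (h : a ≠ b ∧ lens a b = L) :
    CycleStructure rotSys a b L := h.2 ▸ cycleStructure_lens h.1

/-! ### Switching the 8-cycles -/

theorem iso_of_map {v : ℕ} {T S : STS v} (φ : Equiv.Perm (Fin v))
    (h : ∀ B ∈ T.blocks, B.image φ ∈ S.blocks) : T.Iso S := by
  refine ⟨φ, fun B => ⟨h B, fun hB => ?_⟩⟩
  have hc := S.card_blocks _ hB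
  rw [Finset.card_image_of_injective _ φ.injective] at hc
  obtain ⟨p, hp, q, hq, hpq⟩ := Finset.one_lt_card.1 (by omega : 1 < B.card)
  obtain ⟨B', ⟨hB', hp', hq'⟩, -⟩ := T.covers p q hpq
  have := (S.covers (φ p) (φ q) (φ.injective.ne hpq)).unique
    ⟨hB, Finset.mem_image_of_mem _ hp, Finset.mem_image_of_mem _ hq⟩
    ⟨h B' hB', Finset.mem_image_of_mem _ hp', Finset.mem_image_of_mem _ hq'⟩
  rw [Finset.image_injective φ.injective this]
  exact hB'

/-- The alternating walk from `z`. -/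
def alt (a b z : Fin 19) : ℕ → Fin 19
  | 0 => z
  | n + 1 => if n % 2 = 0 then third a (alt a b z n) else third b (alt a b z n)

/-- The isomorphism from the switched system, for the cycle through `z`. -/
def switchFun (z p : Fin 19) : Fin 19 :=
  if p.val < 8 then qB (p.val + if z.val < 8 then 0 else 1)
  else if p.val < 16 then qA (p.val + if z.val < 8 then 1 else 2)
  else p

theorem switchFun_inj : ∀ z p q : Fin 19, switchFun z p = switchFun z q → p = q := by
  decide +kernel

/-- The isomorphism as a permutation. -/
noncomputable def switchPerm (z : Fin 19) : Equiv.Perm (Fin 19) :=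
  Equiv.ofBijective (switchFun z)
    (Finite.injective_iff_bijective.1 fun p q h => switchFun_inj z p q h)

theorem switchPerm_apply (z p : Fin 19) : switchPerm z p = switchFun z p := rfl

theorem alt_eight : ∀ a b z : Fin 19, a ≠ b → Outside a b z → alt a b z 8 = z →
    alt a b z 4 = z ∨ (a = qX ∧ b = qY) ∨ (a = qY ∧ b = qX) := by
  decide +kernel

/-- The conditions ensuring that `switchFun z` is an isomorphism. -/
def SwitchOK (a b z : Fin 19) : Prop :=
  (∀ p q : Fin 19, p ≠ q →
    third (switchFun z p) (switchFun z q) = switchFun z (third p q) ∨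
      ∃ j : Fin 4, {a, alt a b z (2 * j), alt a b z (2 * j + 1)} =
          ({p, q, third p q} : Finset (Fin 19)) ∨
        {b, alt a b z (2 * j + 1), alt a b z (2 * j + 2)} =
          ({p, q, third p q} : Finset (Fin 19))) ∧
  ∀ j : Fin 4,
    third (switchFun z b) (switchFun z (alt a b z (2 * j))) =
      switchFun z (alt a b z (2 * j + 1)) ∧
    third (switchFun z a) (switchFun z (alt a b z (2 * j + 1))) =
      switchFun z (alt a b z (2 * j + 2))

instance (a b z : Fin 19) : Decidable (SwitchOK a b z) := by
  unfold SwitchOK; infer_instance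

theorem switch_ok : ∀ z : Fin 19, z.val < 16 → SwitchOK qX qY z ∧ SwitchOK qY qX z := by
  decide +kernel

theorem outside_lt : ∀ z : Fin 19, Outside qX qY z ∨ Outside qY qX z → z.val < 16 := by
  decide +kernel

theorem switch_iso {a b : Fin 19} {x : ZMod (2 * 4) → Fin 19} {T : STS 19}
    (hx : IsSwitchCycle rotSys a b 4 x) (hT : T.blocks = switchedBlocks rotSys a b 4 x) :
    T.Iso rotSys := by
  obtain ⟨-, hab, hinj, hadj, hbl⟩ := hx
  have hout : ∀ i, Outside a b (x i) := fun i => ((adj_iff hab _ _).1 (hadj i)).1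
  set y : ℕ → Fin 19 := fun n => x (n : ZMod (2 * 4)) with hy
  have houty : ∀ n, Outside a b (y n) := fun n => hout _
  have hA : ∀ j : Fin 4, y (2 * j + 1) = third a (y (2 * j)) := fun j =>
    (triple_mem.1 (hbl j).1).2
  have hB : ∀ j : Fin 4, y (2 * j + 2) = third b (y (2 * j + 1)) := fun j =>
    (triple_mem.1 (hbl j).2).2
  have halt : ∀ n, n ≤ 8 → y n = alt a b (y 0) n := by
    intro n
    induction n with
    | zero => intro _; rfl
    | succ n ih =>
      intro hn
      rw [alt, ← ih (by omega)]
      split_ifs with h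
      · have := hA ⟨n / 2, by omega⟩
        simp only [show 2 * (n / 2) = n by omega] at this
        exact this
      · have := hB ⟨n / 2, by omega⟩
        simp only [show 2 * (n / 2) + 2 = n + 1 by omega,
          show 2 * (n / 2) + 1 = n by omega] at this
        exact this
  have h8 : alt a b (y 0) 8 = y 0 := by
    rw [← halt 8 le_rfl]
    exact congrArg x (by decide)
  have h4 : alt a b (y 0) 4 ≠ y 0 := by
    rw [← halt 4 (by norm_num)]
    intro h
    exact absurd (hinj h) (by decide)
  have hpair := (alt_eight a b (y 0) hab (houty 0) h8).resolve_left h4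
  have hok : SwitchOK a b (y 0) := by
    rcases hpair with ⟨rfl, rfl⟩ | ⟨rfl, rfl⟩
    · exact (switch_ok _ (outside_lt _ (Or.inl (houty 0)))).1
    · exact (switch_ok _ (outside_lt _ (Or.inr (houty 0)))).2
  refine iso_of_map (switchPerm (y 0)) fun B hBT => ?_
  rw [hT, switchedBlocks, Finset.mem_union] at hBT
  have hrem : ∀ B, B ∈ removedBlocks a b 4 x ↔ ∃ j : Fin 4,
      {a, y (2 * j), y (2 * j + 1)} = B ∨ {b, y (2 * j + 1), y (2 * j + 2)} = B := by
    intro B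
    simp only [removedBlocks, Finset.mem_union, Finset.mem_image, Finset.mem_univ, true_and,
      exists_or, hy]
  have hmem : ∀ p q r : Fin 19, p ≠ q → third (switchFun (y 0) p) (switchFun (y 0) q) =
      switchFun (y 0) r →
      ({p, q, r} : Finset (Fin 19)).image (switchPerm (y 0)) ∈ rotSys.blocks := by
    intro p q r hpq h
    rw [Finset.image_insert, Finset.image_insert, Finset.image_singleton, rotSys_blocks,
      triple_mem]
    exact ⟨(switchPerm (y 0)).injective.ne hpq, h.symm⟩
  rcases hBT with hBT | hBT
  · rw [Finset.mem_sdiff, hrem] at hBT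
    have hc := rotSys.card_blocks _ hBT.1
    obtain ⟨p, hp, q, hq, hpq⟩ := Finset.one_lt_card.1 (by omega : 1 < B.card)
    have hBe := rot8_eq B hBT.1 p hp q hq hpq
    rcases hok.1 p q hpq with h | ⟨j, h⟩
    · rw [hBe]
      exact hmem _ _ _ hpq h
    · refine absurd ⟨j, ?_⟩ hBT.2
      rw [hBe, halt (2 * j) (by omega), halt (2 * j + 1) (by omega), halt (2 * j + 2) (by omega)]
      exact h
  · obtain ⟨C, hC, rfl⟩ := Finset.mem_image.1 hBT
    obtain ⟨j, h⟩ := (hrem C).1 hC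
    have hsw : ∀ n, Equiv.swap a b (y n) = y n := fun n =>
      Equiv.swap_apply_of_ne_of_ne (houty n).1 (houty n).2.1
    have himg : ∀ p q r : Fin 19, ({p, q, r} : Finset (Fin 19)).image (Equiv.swap a b) =
        {Equiv.swap a b p, Equiv.swap a b q, Equiv.swap a b r} := by
      intro p q r
      rw [Finset.image_insert, Finset.image_insert, Finset.image_singleton]
    rcases h with rfl | rfl
    · rw [himg, hsw, hsw, Equiv.swap_apply_left]
      refine hmem _ _ _ (houty _).2.1.symm ?_
      rw [halt (2 * j) (by omega), halt (2 * j + 1) (by omega)]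
      exact (hok.2 j).1
    · rw [himg, hsw, hsw, Equiv.swap_apply_right]
      refine hmem _ _ _ (houty _).1.symm ?_
      rw [halt (2 * j + 1) (by omega), halt (2 * j + 2) (by omega)]
      exact (hok.2 j).2

theorem qA_mod (i k : ℕ) : qA (i % 8 + k) = qA (i + k) := by
  simp [qA]

theorem qB_mod (i k : ℕ) : qB (i % 8 + k) = qB (i + k) := by
  simp [qB]

/-- The listed starter blocks generate an `STS(19)` in which the
cycle graph `C_{XY}` consists of exactly two complementary 8-cycles (the only
8-cycles of the system, and switching any 8-cycle yields a system isomorphic to the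
original); `C_{XZ}` and `C_{YZ}` each consist of four 4-cycles; each `C_{A_i B_i}`
consists of a 6-cycle and a 10-cycle; each `C_{A_i A_{i+3}}` and `C_{B_i B_{i+3}}`
consists of a 4-cycle and a 12-cycle; and on every other pair of points the cycle
graph is a single Hamiltonian 16-cycle. -/
theorem rot8_system_cycle_structure :
    ∃ S : STS 19, S.blocks = rot8Blocks ∧
      CycleStructure S qX qY [8, 8] ∧
      (∀ (a b : Fin 19) (W : Finset (Fin 19)), a ≠ b → CycleOn S a b 8 W →
        ({a, b} : Finset (Fin 19)) = {qX, qY}) ∧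
      (∀ (a b : Fin 19) (x : ZMod (2 * 4) → Fin 19) (T : STS 19),
        IsSwitchCycle S a b 4 x → T.blocks = switchedBlocks S a b 4 x → T.Iso S) ∧
      CycleStructure S qX qZ [4, 4, 4, 4] ∧
      CycleStructure S qY qZ [4, 4, 4, 4] ∧
      (∀ i : ℕ,
        CycleStructure S (qA i) (qB i) [6, 10] ∧
        CycleStructure S (qA i) (qA (i + 3)) [4, 12] ∧
        CycleStructure S (qB i) (qB (i + 3)) [4, 12]) ∧
      (∀ a b : Fin 19, a ≠ b →
        ¬(({a, b} : Finset (Fin 19)) = {qX, qY} ∨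
          ({a, b} : Finset (Fin 19)) = {qX, qZ} ∨
          ({a, b} : Finset (Fin 19)) = {qY, qZ} ∨
          ∃ i : ℕ, ({a, b} : Finset (Fin 19)) = {qA i, qB i} ∨
            ({a, b} : Finset (Fin 19)) = {qA i, qA (i + 3)} ∨
            ({a, b} : Finset (Fin 19)) = {qB i, qB (i + 3)}) →
        CycleStructure S a b [16]) := by
  refine ⟨rotSys, rfl, cycleStructure_of (by decide +kernel), ?_, ?_,
    cycleStructure_of (by decide +kernel), cycleStructure_of (by decide +kernel), ?_, ?_⟩
  · intro a b W hab h
    exact eight_lens a b hab (cycleOn_mem_lens hab h)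
  · intro a b x T hx hT
    exact switch_iso hx hT
  · intro i
    obtain ⟨h1, h2, h3⟩ := lens_orbit ⟨i % 8, Nat.mod_lt _ (by norm_num)⟩
    have e1 : qA (i % 8) = qA i := qA_mod i 0
    have e2 : qB (i % 8) = qB i := qB_mod i 0
    simp only [qA_mod, qB_mod, e1, e2] at h1 h2 h3
    exact ⟨cycleStructure_of h1, cycleStructure_of h2, cycleStructure_of h3⟩
  · intro a b hab hn
    refine cycleStructure_of ⟨hab, ?_⟩
    rcases lens_other a b hab with h | h | h | h | ⟨i, h⟩
    · exact h
    · exact absurd (Or.inl h) hn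
    · exact absurd (Or.inr (Or.inl h)) hn
    · exact absurd (Or.inr (Or.inr (Or.inl h))) hn
    · exact absurd (Or.inr (Or.inr (Or.inr ⟨i, h⟩))) hn
end
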